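/- Let q = p^f be a power of a prime p, let v ∈ F_q[t] be a monic irreducible polynomial of degree 1, let r ≥ 1, and let s_1,…,s_r be negative integers. Then ζ_v(s_1,…,s_r) = 0 if and only if either (1) r > 1 and there exists 1 ≤ i ≤ r with r−i > L_{−s_i} + 1, or (2) r = 1 and (q−1) | s_1. -/

import Mathlib

/-!
Since `v` has degree one, a monic `a` of degree `d + 1` is uniquely `v * b + e` with `b` monic of
degree `d` and `e ∈ F`. Summing `(v * b + e) ^ k` over the constants `e` gives recursions showing
that `S_d(-k)` and `S̃_d(-k)` are the values at `v` of the polynomials `sP F d k` and `rP F d k`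
(`powerSum_eq`, `rPowerSum_eq`). Vanishing of the zeta value may therefore be tested on the
polynomial `zetaP` in one variable `X` (`zetaV_eq`).

For `r = 1` put `Z(k) = Σ_d sP F d k`. Then `Σ_d rP F d k = 1 + (Z(k) - 1) - X ^ k Z(k)`, and
`Z(k) = 0` by induction if `q - 1` divides `k` (`sum_rP_eq_zero`). Otherwise the sum has constant
term `1` (`sum_rP_ne_zero`).

For `r ≥ 2` the point is to know the exact order at `X = 0` of `rP F d k`. Unfolding the recursion
and using Lucas' theorem, the coefficient of `X ^ N` is a sum over chains
`k ≥ R_1 > R_2 > … > R_d` in which each number is digitwise dominated in base `p` by the preceding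
one, all are congruent modulo `q - 1`, and `Σ R_i = N` (predicates `WCh`, `SCh`); each chain
contributes a nonzero scalar. Chains of length `d + 1` exist iff `d ≤ L_k` (`WCh.bound`,
`exists_min_chain`, `Lval_lt_iff`), and the crucial fact `exists_min_chain` is that in this case
exactly one of them has the least sum. So the order of `rP F d k` is this least sum, and it
strictly increases with `d ≥ 1`, because deleting the head of a chain of length at least two gives
a cheaper chain (`exists_order`). In the sum defining `zetaP` every `d` satisfies
`d_i ≥ r - i` (`i` counted from `1`), and the term `d = (r - 1, …, 1, 0)` has strictly smallest
order; hence `zetaP` is nonzero unless for some `i` all the factors `rP F d (k i)` with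
`d ≥ r - i` vanish, i.e. unless `r - i > L + 1` (`zetaP_eq_zero_iff`, `Lval_cond`).

Uniqueness of the cheapest chain is a statement about base-`p` digits. Group the digit positions by
their class modulo `f`, and regard each unit of the digit of `k` at position `j` as an item of
value `p ^ j`. The congruence `R ≡ k` modulo `q - 1` says exactly that the numbers of items of `R`
in the classes are `cap s + p * m s - m (s - 1)` for an integer vector `m` indexed by `ℤ/f`
(`vec`, `cnt_vec`), and for given numbers the least `R` uses the lowest items of each class
(`G_vec_le`). This turns chains of numbers into chains of vectors decreasing by at least `1` in
every coordinate (`ItemSystem.NCh`). The first vector of an optimal chain of vectors is the one of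
least value among all vectors that can start a chain of this length (`ItemSystem.Opt.head_le`): an
exchange argument replaces a more expensive head, either in all coordinates (`ItemSystem.whole`) or
along a cyclic interval (`ItemSystem.interval`), the loss in the rest of the chain being controlled
by `ItemSystem.shift`. As the value determines the vector, optimal chains are unique
(`ItemSystem.Opt.unique`). Finally uniqueness forces consecutive vectors of the optimal chain to
have decreasing item counts (`ItemSystem.Opt.nested`), so it does come from a chain of digitwise
dominated numbers.
-/

open Polynomial

open scoped Classical

/-- The monic polynomial `X^d + c_{d-1} X^{d-1} + ... + c_0` determined by its lower
coefficients `c : Fin d → F`; these parametrize the monic polynomials of degree `d`. -/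
noncomputable def monicPoly (F : Type) [Field F] (d : ℕ) (c : Fin d → F) : F[X] :=
  X ^ d + ∑ i : Fin d, C (c i) * X ^ (i : ℕ)

/-- `S_d(-k) = Σ_{a monic of degree d} a^k`. -/
noncomputable def powerSum (F : Type) [Field F] [Fintype F] (d k : ℕ) : F[X] :=
  ∑ c : Fin d → F, monicPoly F d c ^ k

/-- `S̃_d(-k) = Σ_{a monic of degree d, v ∤ a} a^k`. -/
noncomputable def rPowerSum (F : Type) [Field F] [Fintype F] (v : F[X]) (d k : ℕ) : F[X] :=
  ∑ c : Fin d → F, if v ∣ monicPoly F d c then 0 else monicPoly F d c ^ k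

/-- `∑ i, m i = k` with no carrying of base-`p` digits. -/
def NoCarry (p : ℕ) {n : ℕ} (m : Fin n → ℕ) (k : ℕ) : Prop :=
  (∑ i, m i = k) ∧
    ∀ j : ℕ, (∑ i, (Nat.digits p (m i)).getD j 0) = (Nat.digits p k).getD j 0

/-- `U_d(k)`. -/
def Uset (p q d k : ℕ) : Set (Fin (d + 1) → ℕ) :=
  {m | NoCarry p m k ∧ ∀ i : Fin (d + 1), 0 < (i : ℕ) → 0 < m i ∧ (q - 1) ∣ m i}

/-- `V_d(k)`. -/
def Vset (p q d k : ℕ) : Set (Fin (d + 1) → ℕ) :=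
  {m | m ∈ Uset p q d k ∧ 0 < m 0}

/-- `W_d(k)`, the index set for the restricted power sum at `v = t`. -/
def Wset (p q d k : ℕ) : Set (Fin (d + 1) → ℕ) :=
  {m | NoCarry p m k ∧
      (∀ i : Fin (d + 1), 0 < (i : ℕ) → (i : ℕ) < d → 0 < m i ∧ (q - 1) ∣ m i) ∧
      (q - 1) ∣ m (Fin.last d)}

/-- the weight `d·m_0 + (d-1)·m_1 + ⋯ + 1·m_{d-1}`. -/
def wt {d : ℕ} (m : Fin (d + 1) → ℕ) : ℕ := ∑ i : Fin (d + 1), (d - (i : ℕ)) * m i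

/-- `L_k = min_{0 ≤ i ≤ f-1} l(k·p^i)/(q-1)` where `l` is the base-`q` digit sum. -/
noncomputable def Lval (q p f k : ℕ) : ℚ :=
  (Finset.Icc 0 (f - 1)).inf' ⟨0, by simp⟩
    (fun i => ((Nat.digits q (k * p ^ i)).sum : ℚ) / ((q : ℚ) - 1))

/-- the `v`-adic multiple zeta value at negative integers `s_1, …, s_r`. -/
noncomputable def zetaV (F : Type) [Field F] [Fintype F] (v : F[X]) {r : ℕ}
    (s : Fin r → ℤ) : F[X] :=
  ∑ᶠ d ∈ {d : Fin r → ℕ | StrictAnti d}, ∏ i, rPowerSum F v (d i) (-(s i)).toNat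

/-- the multiple zeta value at negative integers `s_1, …, s_r`. -/
noncomputable def zetaMZV (F : Type) [Field F] [Fintype F] {r : ℕ} (s : Fin r → ℤ) : F[X] :=
  ∑ᶠ d ∈ {d : Fin r → ℕ | StrictAnti d}, ∏ i, powerSum F (d i) (-(s i)).toNat

/-- the trivial-zero condition for a prime of degree `e`. -/
def TrivialZeroCond (q p f : ℕ) {r : ℕ} (s : Fin r → ℤ) (e : ℕ) : Prop :=
  (∃ i : Fin r, s i < 0 ∧
      Lval q p f (-(s i)).toNat + (e : ℚ) < ((r - 1 - (i : ℕ) : ℕ) : ℚ)) ∨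
  (∃ i j : Fin r, j < i ∧ s i < 0 ∧ s j < 0 ∧
      (r - 1 - (i : ℕ) : ℕ) < e ∧
      Lval q p f (-(s i)).toNat < ((r - 1 - (i : ℕ) : ℕ) : ℚ) ∧
      Lval q p f (-(s j)).toNat < (((i : ℕ) - (j : ℕ) : ℕ) : ℚ))

set_option linter.unusedSectionVars false

/-! ### Item systems -/

/-- For every class `s ∈ ℤ/f` a nondecreasing sequence of exponents `e s 0 ≤ e s 1 ≤ …` congruent
to `s` modulo `f`; the pair `(s, x)` is an item of type `s` and value `p ^ e s x`. By `e_step` no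
exponent occurs more than `b = p - 1` times. The first `cap s` items of type `s` are available.
The numbers `U s` solve the linear system `hU`; for the digits of an integer they are weighted
digit sums. -/
structure ItemSystem (f : ℕ) where
  p : ℕ
  b : ℕ
  hpb : p = b + 1
  hb : 1 ≤ b
  e : ZMod f → ℕ → ℕ
  e_mono : ∀ s, Monotone (e s)
  e_step : ∀ s x, e s x + f ≤ e s (x + b)
  e_type : ∀ s x, ((e s x : ℕ) : ZMod f) = s
  cap : ZMod f → ℕ
  U : ZMod f → ℤ
  hU : ∀ s, (p : ℤ) * U s = ((p : ℤ) ^ f - 1) * cap s + U (s - 1)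

namespace ItemSystem

variable {f : ℕ} (S : ItemSystem f)

/-- The modulus `q = p ^ f`. -/
def q : ℕ := S.p ^ f

/-- Total value of the `n` cheapest items of type `s`. -/
def g (s : ZMod f) (n : ℕ) : ℕ := ∑ x ∈ Finset.range n, S.p ^ S.e s x

/-- Number of items of type `s` selected by the vector `m`; the vector `0` selects all available
items. -/
def cnt (m : ZMod f → ℤ) (s : ZMod f) : ℤ := S.cap s + S.p * m s - m (s - 1)

/-- The vector `m` selects a nonnegative number of available items of every type. -/
def Feas (m : ZMod f → ℤ) : Prop := ∀ s, 0 ≤ S.cnt m s ∧ S.cnt m s ≤ S.cap s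

/-- The lower bound a feasible vector must satisfy in order to be followed by `h` further vectors
in a chain (see `NCh.above` and `exists_chain`). -/
def Above (h : ℕ) (m : ZMod f → ℤ) : Prop :=
  ∀ s, ((S.q : ℤ) - 1) * h ≤ S.U s + ((S.q : ℤ) - 1) * m s

lemma p_ge : 2 ≤ S.p := by have := S.hb; have := S.hpb; omega

lemma p_pos : 0 < S.p := by have := S.p_ge; omega

lemma q_ge [NeZero f] : 2 ≤ S.q :=
  le_trans S.p_ge (Nat.le_self_pow (NeZero.ne f) _)

lemma g_zero (s : ZMod f) : S.g s 0 = 0 := by simp [g]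

lemma g_mono (s : ZMod f) : Monotone (S.g s) := by
  intro a b h
  exact Finset.sum_le_sum_of_subset (by simpa using h)

lemma g_succ (s : ZMod f) (n : ℕ) : S.g s (n + 1) = S.g s n + S.p ^ S.e s n := by
  simp [g, Finset.sum_range_succ]

lemma g_pos (s : ZMod f) {n : ℕ} (h : 0 < n) : 0 < S.g s n := by
  obtain ⟨m, rfl⟩ : ∃ m, n = m + 1 := ⟨n - 1, by omega⟩
  rw [g_succ]
  have := pow_pos S.p_pos (S.e s m)
  omega

lemma g_add (s : ZMod f) (a n : ℕ) :
    S.g s (a + n) = S.g s a + ∑ x ∈ Finset.range n, S.p ^ S.e s (a + x) := by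
  simp [g, Finset.sum_range_add]

/-- Moving up by `b` items raises every exponent by at least `f`, so multiplies values by `q`. -/
lemma q_mul_g_lt (s : ZMod f) (n : ℕ) : S.q * S.g s n < S.g s (n + S.b) := by
  rw [add_comm n, g_add]
  have h1 : S.q * S.g s n ≤ ∑ x ∈ Finset.range n, S.p ^ S.e s (S.b + x) := by
    rw [g, Finset.mul_sum]
    apply Finset.sum_le_sum
    intro x _
    rw [q, ← pow_add]
    apply Nat.pow_le_pow_right S.p_pos
    have := S.e_step s x
    rw [add_comm S.b]
    omega
  have := S.g_pos s (n := S.b) S.hb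
  omega

lemma q_mul_g_sub_lt (s : ZMod f) {c : ℕ} (h : 0 < c) : S.q * S.g s (c - S.b) < S.g s c := by
  rcases le_total S.b c with h1 | h1
  · have := S.q_mul_g_lt s (c - S.b)
    rwa [Nat.sub_add_cancel h1] at this
  · rw [Nat.sub_eq_zero_of_le h1, g_zero, mul_zero]
    exact S.g_pos s h

lemma q_mul_g_sub_le (s : ZMod f) (c : ℕ) : S.q * S.g s (c - S.b) ≤ S.g s c := by
  rcases Nat.eq_zero_or_pos c with rfl | h
  · simp [g_zero]
  · exact (S.q_mul_g_sub_lt s h).le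

lemma g_sub_le_top (s : ZMod f) (c : ℕ) :
    S.q * S.g s (c + 1 - S.b) ≤ S.g s (c + 1 - S.b) + S.b * S.p ^ S.e s c := by
  rcases le_total S.b (c + 1) with h1 | h1
  · have h2 := (S.q_mul_g_lt s (c + 1 - S.b)).le
    rw [g_add] at h2
    refine h2.trans (Nat.add_le_add_left ?_ _)
    have : ∀ x ∈ Finset.range S.b, S.p ^ S.e s (c + 1 - S.b + x) ≤ S.p ^ S.e s c := by
      intro x hx
      apply Nat.pow_le_pow_right S.p_pos
      apply S.e_mono
      have := Finset.mem_range.1 hx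
      omega
    simpa using Finset.sum_le_card_nsmul _ _ _ this
  · rw [Nat.sub_eq_zero_of_le h1, g_zero]; simp

/-- Marginal values are nondecreasing, so `g s` is convex: replacing `(a, b)` by a pair `(a', b')`
with the same sum and `a'` between `a` and `b` does not raise the total. -/
lemma g_convex (s : ZMod f) {a b a' b' : ℤ} (h0 : 0 ≤ a) (h1 : a ≤ a') (h2 : a' ≤ b)
    (h3 : a + b = a' + b') :
    S.g s a'.toNat + S.g s b'.toNat ≤ S.g s a.toNat + S.g s b.toNat := by
  obtain ⟨n, rfl⟩ := Int.eq_ofNat_of_zero_le h0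
  obtain ⟨k, hk⟩ := Int.eq_ofNat_of_zero_le (sub_nonneg.2 h1)
  obtain ⟨l, hl⟩ := Int.eq_ofNat_of_zero_le (sub_nonneg.2 h2)
  have e1 : a'.toNat = n + k := by omega
  have e2 : b'.toNat = n + l := by omega
  have e3 : b.toNat = (n + l) + k := by omega
  have e4 : (n : ℤ).toNat = n := by omega
  rw [e1, e2, e3, e4, g_add, g_add S s (n + l)]
  have : ∑ x ∈ Finset.range k, S.p ^ S.e s (n + x) ≤
      ∑ x ∈ Finset.range k, S.p ^ S.e s (n + l + x) := by
    apply Finset.sum_le_sum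
    intro x _
    apply Nat.pow_le_pow_right S.p_pos
    apply S.e_mono
    omega
  omega

lemma e_ne {s t : ZMod f} (h : s ≠ t) (x y : ℕ) : S.e s x ≠ S.e t y := by
  intro h'
  exact h (by rw [← S.e_type s x, ← S.e_type t y, h'])

variable [NeZero f]

/-- Value of the vector `m`: the total value of the cheapest items in the numbers selected. -/
def G (m : ZMod f → ℤ) : ℕ := ∑ s, S.g s (S.cnt m s).toNat

/-- As an exponent is shared by at most `p - 1` items, a sum of distinct items of exponents below
`Y` is less than `p ^ Y`. -/
lemma sum_items_lt (T : Finset (Σ _ : ZMod f, ℕ)) (Y : ℕ) (h : ∀ z ∈ T, S.e z.1 z.2 < Y) :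
    ∑ z ∈ T, S.p ^ S.e z.1 z.2 < S.p ^ Y := by
  have key : ∑ z ∈ T, S.p ^ S.e z.1 z.2 =
      ∑ j ∈ Finset.range Y, (T.filter (fun z => S.e z.1 z.2 = j)).card * S.p ^ j := by
    rw [← Finset.sum_fiberwise_of_maps_to (g := fun z => S.e z.1 z.2) (t := Finset.range Y)
      (fun z hz => by simpa using h z hz)]
    apply Finset.sum_congr rfl
    intro j _
    rw [Finset.sum_congr rfl (g := fun _ => S.p ^ j), Finset.sum_const, smul_eq_mul]
    intro z hz
    rw [(Finset.mem_filter.1 hz).2]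
  have card : ∀ j, (T.filter (fun z => S.e z.1 z.2 = j)).card ≤ S.b := by
    intro j
    rcases (T.filter (fun z => S.e z.1 z.2 = j)).eq_empty_or_nonempty with h0 | h0
    · simp [h0]
    · obtain ⟨z0, hz0, hmin⟩ := Finset.exists_min_image _ (fun z => z.2) h0
      have e0 := (Finset.mem_filter.1 hz0).2
      have : (T.filter (fun z => S.e z.1 z.2 = j)).card ≤ (Finset.Ico z0.2 (z0.2 + S.b)).card := by
        apply Finset.card_le_card_of_injOn (fun z => z.2)
        · intro z hz
          have hz' := hmin z hz
          have e1 := (Finset.mem_filter.1 hz).2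
          have t1 : z.1 = z0.1 := by
            rw [← S.e_type z.1 z.2, ← S.e_type z0.1 z0.2, e0, e1]
          simp only [Finset.coe_Ico, Set.mem_Ico]
          refine ⟨hz', ?_⟩
          by_contra hc
          push Not at hc
          have a1 := S.e_mono z0.1 hc
          have a2 := S.e_step z0.1 z0.2
          rw [t1] at e1
          have := NeZero.pos f
          omega
        · intro z hz z' hz' hzz
          have e1 := (Finset.mem_filter.1 hz).2
          have e2 := (Finset.mem_filter.1 hz').2
          have t1 : z.1 = z'.1 := by
            rw [← S.e_type z.1 z.2, ← S.e_type z'.1 z'.2, e2, e1]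
          exact Sigma.ext t1 (by simpa using hzz)
      simpa using this
  rw [key]
  have geo : ∀ Y, ∑ j ∈ Finset.range Y, S.b * S.p ^ j + 1 = S.p ^ Y := by
    intro Y
    induction Y with
    | zero => simp
    | succ n ih =>
      rw [Finset.sum_range_succ, pow_succ]
      have := S.hpb
      have h3 : S.p ^ n * S.p = S.p ^ n * S.b + S.p ^ n := by
        conv_lhs => rw [show S.p ^ n * S.p = S.p ^ n * (S.b + 1) from by rw [← S.hpb]]
        ring
      rw [h3]; linarith
  have : ∑ j ∈ Finset.range Y, (T.filter (fun z => S.e z.1 z.2 = j)).card * S.p ^ j ≤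
      ∑ j ∈ Finset.range Y, S.b * S.p ^ j :=
    Finset.sum_le_sum fun j _ => Nat.mul_le_mul_right _ (card j)
  have := geo Y
  omega

/-- If `c'` has an item that `c` lacks, of larger exponent than every item of `c` missing from
`c'`, then `c'` has the larger value. -/
lemma sum_g_lt (c c' : ZMod f → ℕ) (s : ZMod f) (x : ℕ) (h1 : c s ≤ x) (h2 : x < c' s)
    (h : ∀ t y, c' t ≤ y → y < c t → S.e t y < S.e s x) :
    ∑ t, S.g t (c t) < ∑ t, S.g t (c' t) := by
  have hsplit : ∀ t, S.g t (c t) ≤ S.g t (min (c t) (c' t)) +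
      ∑ y ∈ Finset.Ico (c' t) (c t), S.p ^ S.e t y := by
    intro t
    rcases le_total (c t) (c' t) with h | h
    · simp [h]
    · rw [min_eq_right h, g, g, Finset.sum_range_add_sum_Ico _ h]
  have hT := S.sum_items_lt (Finset.univ.sigma fun t => Finset.Ico (c' t) (c t)) (S.e s x)
    (by
      intro z hz
      simp only [Finset.mem_sigma, Finset.mem_univ, Finset.mem_Ico, true_and] at hz
      exact h _ _ hz.1 hz.2)
  rw [Finset.sum_sigma] at hT
  dsimp only at hT
  have hs : S.g s (min (c s) (c' s)) + S.p ^ S.e s x ≤ S.g s (c' s) := by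
    rw [min_eq_left (by omega)]
    have := S.g_mono s (show c s ≤ x from h1)
    have h3 := S.g_mono s (show x + 1 ≤ c' s from h2)
    rw [g_succ] at h3
    omega
  have hr : ∑ t, S.g t (min (c t) (c' t)) + S.p ^ S.e s x ≤ ∑ t, S.g t (c' t) := by
    rw [← Finset.add_sum_erase _ _ (Finset.mem_univ s),
      ← Finset.add_sum_erase _ (fun t => S.g t (c' t)) (Finset.mem_univ s)]
    have : ∑ t ∈ Finset.univ.erase s, S.g t (min (c t) (c' t)) ≤
        ∑ t ∈ Finset.univ.erase s, S.g t (c' t) :=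
      Finset.sum_le_sum fun t _ => S.g_mono t (min_le_right _ _)
    omega
  have hl : ∑ t, S.g t (c t) ≤ ∑ t, S.g t (min (c t) (c' t)) +
      ∑ t, ∑ y ∈ Finset.Ico (c' t) (c t), S.p ^ S.e t y := by
    rw [← Finset.sum_add_distrib]
    exact Finset.sum_le_sum fun t _ => hsplit t
  omega

lemma sum_g_inj (c c' : ZMod f → ℕ) (h : ∑ t, S.g t (c t) = ∑ t, S.g t (c' t)) : c = c' := by
  by_contra hne
  have hD : (Finset.univ.filter fun t => c t ≠ c' t).Nonempty := by
    by_contra h0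
    rw [Finset.not_nonempty_iff_eq_empty, Finset.filter_eq_empty_iff] at h0
    exact hne (funext fun t => by simpa using h0 (Finset.mem_univ t))
  obtain ⟨s, hs, hmax⟩ := Finset.exists_max_image _
    (fun t => S.e t (max (c t) (c' t) - 1)) hD
  have hs' : c s ≠ c' s := (Finset.mem_filter.1 hs).2
  have aux : ∀ d d' : ZMod f → ℕ, (∀ t, d t ≠ d' t →
      S.e t (max (d t) (d' t) - 1) ≤ S.e s (max (d s) (d' s) - 1)) → d s < d' s →
      ∑ t, S.g t (d t) < ∑ t, S.g t (d' t) := by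
    intro d d' hm hlt
    apply S.sum_g_lt d d' s (d' s - 1) (by omega) (by omega)
    intro t y h1 h2
    have hts : t ≠ s := by rintro rfl; omega
    have h3 := hm t (by omega)
    rw [max_eq_left (by omega), max_eq_right (by omega)] at h3
    have h4 := S.e_mono t (show y ≤ d t - 1 by omega)
    have h5 := S.e_ne hts (d t - 1) (d' s - 1)
    omega
  rcases lt_or_gt_of_ne hs' with h1 | h1
  · have := aux c c' (fun t ht => hmax t (by simp [ht])) h1
    omega
  · have := aux c' c (fun t ht => by
      have := hmax t (by simp [Ne.symm ht])
      simpa [max_comm] using this) h1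
    omega

/-- If `c'` has smaller value than `c`, then the last item of `c` of some type `t` has been removed,
and it has larger exponent than the next item of any type where `c'` exceeds `c`. -/
lemma exists_top (c c' : ZMod f → ℕ) (h : ∑ t, S.g t (c' t) < ∑ t, S.g t (c t)) :
    ∃ t, c' t < c t ∧ ∀ s, c s < c' s → S.e s (c s) < S.e t (c t - 1) := by
  have hD : (Finset.univ.filter fun t => c' t < c t).Nonempty := by
    by_contra h0
    rw [Finset.not_nonempty_iff_eq_empty, Finset.filter_eq_empty_iff] at h0
    have : ∑ t, S.g t (c t) ≤ ∑ t, S.g t (c' t) :=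
      Finset.sum_le_sum fun t _ => S.g_mono t (by simpa using h0 (Finset.mem_univ t))
    omega
  obtain ⟨t, ht, hmax⟩ := Finset.exists_max_image _ (fun t => S.e t (c t - 1)) hD
  refine ⟨t, (Finset.mem_filter.1 ht).2, ?_⟩
  intro s hs
  by_contra hc
  have ht' := (Finset.mem_filter.1 ht).2
  have := S.sum_g_lt c c' s (c s) le_rfl hs (by
    intro t' y h1 h2
    have h3 := hmax t' (by simp; omega)
    have h4 := S.e_mono t' (show y ≤ c t' - 1 by omega)
    have hts : t' ≠ s := by rintro rfl; omega
    have := S.e_ne hts y (c s)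
    omega)
  omega

end ItemSystem

/-! ### Chains of vectors and the shifting lemma -/

namespace ItemSystem
variable {f : ℕ} (S : ItemSystem f)

/-- The quantity bounded below in `Above`; it satisfies the recursion `p_mul_W`. -/
def W (m : ZMod f → ℤ) (s : ZMod f) : ℤ := S.U s + ((S.q : ℤ) - 1) * m s

lemma p_mul_W (m : ZMod f → ℤ) (s : ZMod f) :
    (S.p : ℤ) * S.W m s = ((S.q : ℤ) - 1) * S.cnt m s + S.W m (s - 1) := by
  have := S.hU s
  simp only [W, cnt, q, Nat.cast_pow]
  linear_combination this

lemma cnt_mono_left {m m' : ZMod f → ℤ} {s : ZMod f} (h : m s ≤ m' s)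
    (h' : m (s - 1) = m' (s - 1)) : S.cnt m s ≤ S.cnt m' s := by
  simp only [cnt]
  have : (S.p : ℤ) * m s ≤ S.p * m' s := mul_le_mul_of_nonneg_left h (by positivity)
  linarith

lemma cnt_le_sub {m m' : ZMod f → ℤ} {s : ZMod f} (h : m s ≤ m' s - 1)
    (h' : m (s - 1) = m' (s - 1) - 1) : S.cnt m s ≤ S.cnt m' s - S.b := by
  simp only [cnt]
  have : (S.p : ℤ) * m s ≤ S.p * (m' s - 1) := mul_le_mul_of_nonneg_left h (by positivity)
  have h3 : (S.p : ℤ) = S.b + 1 := by exact_mod_cast S.hpb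
  linarith

lemma Above.mono {h h' : ℕ} {m m' : ZMod f → ℤ} [NeZero f] (H : S.Above h m) (hh : h' ≤ h)
    (hm : m ≤ m') : S.Above h' m' := by
  intro s
  have hq : (2 : ℤ) ≤ S.q := by exact_mod_cast S.q_ge
  have h1 := H s
  have h2 : ((S.q : ℤ) - 1) * h' ≤ ((S.q : ℤ) - 1) * h :=
    mul_le_mul_of_nonneg_left (by exact_mod_cast hh) (by linarith)
  have h3 : ((S.q : ℤ) - 1) * m s ≤ ((S.q : ℤ) - 1) * m' s :=
    mul_le_mul_of_nonneg_left (hm s) (by linarith)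
  linarith

lemma Above.sub_one {h : ℕ} {m : ZMod f → ℤ} (H : S.Above (h + 1) m) : S.Above h (m - 1) := by
  intro s
  have h1 := H s
  push_cast at h1
  simp only [Pi.sub_apply, Pi.one_apply]
  linarith

lemma Above.of_sub_one {h : ℕ} {m : ZMod f → ℤ} (H : S.Above h (m - 1)) : S.Above (h + 1) m := by
  intro s
  have h1 := H s
  simp only [Pi.sub_apply, Pi.one_apply] at h1
  push_cast
  linarith

lemma Above.inf {h : ℕ} {m m' : ZMod f → ℤ} (H : S.Above h m) (H' : S.Above h m') :
    S.Above h (m ⊓ m') := by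
  intro s
  rcases le_total (m s) (m' s) with h1 | h1
  · simpa [h1] using H s
  · simpa [h1] using H' s

variable [NeZero f]

/-- A property of `ℤ/f` that propagates from `s - 1` to `s` holds everywhere once it holds
somewhere. -/
lemma circle {P : ZMod f → Prop} (t : ZMod f) (h0 : P t) (h : ∀ s, P (s - 1) → P s) :
    ∀ s, P s := by
  have key : ∀ n : ℕ, P (t + n) := by
    intro n
    induction n with
    | zero => simpa using h0
    | succ n ih =>
      apply h
      have : t + ((n + 1 : ℕ) : ZMod f) - 1 = t + n := by push_cast; ring
      rwa [this]
  intro s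
  have := key (s - t).val
  rwa [ZMod.natCast_zmod_val, add_sub_cancel] at this

lemma nonpos_of_mul_le (δ : ZMod f → ℤ) (h : ∀ s, (S.p : ℤ) * δ s ≤ δ (s - 1)) (s : ZMod f) :
    δ s ≤ 0 := by
  obtain ⟨t, -, ht⟩ := Finset.exists_max_image Finset.univ δ ⟨0, Finset.mem_univ _⟩
  have h1 := h t
  have h2 := ht (t - 1) (Finset.mem_univ _)
  have h3 := ht s (Finset.mem_univ _)
  have hp : (2 : ℤ) ≤ S.p := by exact_mod_cast S.p_ge
  nlinarith

lemma le_of_cnt_le {m m' : ZMod f → ℤ} (h : ∀ s, S.cnt m s ≤ S.cnt m' s) : m ≤ m' := by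
  intro s
  have := S.nonpos_of_mul_le (fun s => m s - m' s) (by
    intro s
    have := h s
    simp only [cnt] at this
    linarith) s
  linarith

lemma cnt_inj {m m' : ZMod f → ℤ} (h : ∀ s, S.cnt m s = S.cnt m' s) : m = m' :=
  le_antisymm (S.le_of_cnt_le fun s => (h s).le) (S.le_of_cnt_le fun s => (h s).ge)

lemma le_sub_one_of_cnt_le {m m' : ZMod f → ℤ} (h : ∀ s, S.cnt m s ≤ S.cnt m' s)
    (hne : m ≠ m') : m ≤ m' - 1 := by
  have hle := S.le_of_cnt_le h
  have : ∃ t, m t < m' t := by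
    by_contra hc
    push Not at hc
    exact hne (le_antisymm hle hc)
  obtain ⟨t, ht⟩ := this
  have := circle (P := fun s => m s < m' s) t ht (by
    intro s hs
    have h1 := h s
    have hp : (2 : ℤ) ≤ S.p := by exact_mod_cast S.p_ge
    simp only [cnt] at h1
    by_contra hc
    nlinarith)
  intro s
  simp only [Pi.sub_apply, Pi.one_apply]
  have := this s
  omega

lemma G_inj {m m' : ZMod f → ℤ} (hm : S.Feas m) (hm' : S.Feas m') (h : S.G m = S.G m') :
    m = m' := by
  have := S.sum_g_inj _ _ h
  apply S.cnt_inj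
  intro s
  have h1 := congrFun this s
  have := (hm s).1
  have := (hm' s).1
  omega

lemma above_zero {m : ZMod f → ℤ} (h : ∀ s, 0 ≤ S.cnt m s) : S.Above 0 m := by
  have hq : (2 : ℤ) ≤ S.q := by exact_mod_cast S.q_ge
  have hp : (2 : ℤ) ≤ S.p := by exact_mod_cast S.p_ge
  have := S.nonpos_of_mul_le (fun s => - S.W m s) (by
    intro s
    have h1 := S.p_mul_W m s
    have h2 := mul_nonneg (show (0 : ℤ) ≤ (S.q : ℤ) - 1 by linarith) (h s)
    linarith)
  intro s
  have := this s
  simp only [W] at this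
  simp only [Nat.cast_zero, mul_zero]
  linarith

/-- A vector `m0` satisfying `Above h` can be lowered, keeping `Above h`, until all item counts are
nonnegative, in such a way that coordinate `s - 1` is only lowered when the count at `s` becomes
zero. -/
lemma exists_ext {h : ℕ} (m0 : ZMod f → ℤ) (H : S.Above h m0) :
    ∃ m, m ≤ m0 ∧ S.Above h m ∧ (∀ s, 0 ≤ S.cnt m s) ∧
      ∀ s, S.cnt m s = 0 ∨ m (s - 1) = m0 (s - 1) := by
  have hq : (2 : ℤ) ≤ S.q := by exact_mod_cast S.q_ge
  have hp : (2 : ℤ) ≤ S.p := by exact_mod_cast S.p_ge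
  induction hN : ∑ s, (S.W m0 s).toNat using Nat.strong_induction_on generalizing m0 with
  | _ N ih =>
  by_cases hc : ∀ s, 0 ≤ S.cnt m0 s
  · exact ⟨m0, le_rfl, H, hc, fun s => Or.inr rfl⟩
  push Not at hc
  obtain ⟨s, hs⟩ := hc
  have hs' : S.cap s + S.p * m0 s < m0 (s - 1) := by simp only [cnt] at hs; linarith
  -- lower the coordinate `s - 1` just enough to make the count at `s` zero
  set m1 := Function.update m0 (s - 1) (S.cap s + S.p * m0 s) with hm1
  have hle : m1 ≤ m0 := by
    intro t
    by_cases ht : t = s - 1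
    · subst ht; simp [hm1]; exact hs'.le
    · simp [hm1, ht]
  have hW0 : 0 ≤ ((S.q : ℤ) - 1) * h := mul_nonneg (by linarith) (by positivity)
  have hW1 : S.W m1 (s - 1) = S.p * S.W m0 s := by
    rw [p_mul_W]; simp only [W, hm1, Function.update_self, cnt]; ring
  have H1 : S.Above h m1 := by
    intro t
    by_cases ht : t = s - 1
    · subst ht
      have := H s
      change _ ≤ S.W m1 (s - 1)
      change _ ≤ S.W m0 s at this
      have h0 := hW0
      rw [hW1]
      nlinarith
    · have := H t
      simpa [hm1, ht] using this
  have hlt : ∑ t, (S.W m1 t).toNat < N := by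
    rw [← hN]
    apply Finset.sum_lt_sum
    · intro t _
      apply Int.toNat_le_toNat
      have := mul_le_mul_of_nonneg_left (hle t) (show (0 : ℤ) ≤ (S.q : ℤ) - 1 by linarith)
      simp only [W]; linarith
    · refine ⟨s - 1, Finset.mem_univ _, ?_⟩
      have h1 : 0 ≤ S.W m1 (s - 1) := (hW0).trans (H1 (s - 1))
      have h2 : S.W m1 (s - 1) < S.W m0 (s - 1) := by
        simp only [W, hm1, Function.update_self]
        nlinarith
      omega
  obtain ⟨m, a1, a2, a3, a4⟩ := ih _ hlt m1 H1 rfl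
  refine ⟨m, a1.trans hle, a2, a3, ?_⟩
  intro t
  rcases a4 t with h1 | h1
  · exact Or.inl h1
  · by_cases ht : t = s
    · subst ht
      left
      apply le_antisymm _ (a3 t)
      have h2 := (a1.trans hle) t
      simp only [hm1, Function.update_self] at h1
      simp only [cnt, h1]
      nlinarith
    · right
      have : t - 1 ≠ s - 1 := fun h => ht (sub_left_injective h)
      simpa [hm1, this] using h1

/-- Chains of feasible vectors with head at most `M`, each further vector being smaller than the
preceding one by at least `1` in every coordinate. -/
def NCh : (ZMod f → ℤ) → List (ZMod f → ℤ) → Prop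
  | _, [] => True
  | M, n :: l => n ≤ M ∧ S.Feas n ∧ NCh (n - 1) l

/-- Total value of a chain of vectors. -/
def cost (l : List (ZMod f → ℤ)) : ℕ := (l.map S.G).sum

lemma NCh.mono {M M' : ZMod f → ℤ} (h : M ≤ M') : ∀ {l}, S.NCh M l → S.NCh M' l
  | [], _ => trivial
  | _ :: _, ⟨h1, h2⟩ => ⟨h1.trans h, h2⟩

lemma NCh.above : ∀ {l : List (ZMod f → ℤ)} {n : ZMod f → ℤ}, S.Feas n → S.NCh (n - 1) l →
    S.Above l.length n
  | [], _, h, _ => S.above_zero fun s => (h s).1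
  | _ :: _, _, _, ⟨h1, h2, h3⟩ => by
    have := NCh.above h2 h3
    exact Above.of_sub_one S (this.mono S le_rfl h1)

/-- Bound, at type `s`, for `q - 1` times the extra cost of the rest of a chain when its head `B`
is replaced by `A`; nothing is lost unless the coordinate `s - 1` is lowered. -/
def hot (A B : ZMod f → ℤ) (s : ZMod f) : ℕ :=
  if A (s - 1) < B (s - 1) then S.q * S.g s ((S.cnt A s).toNat - S.b) else 0

lemma hot_le (A B : ZMod f → ℤ) (s : ZMod f) : S.hot A B s ≤ S.g s (S.cnt A s).toNat := by
  unfold hot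
  split_ifs
  · exact S.q_mul_g_sub_le _ _
  · positivity

/-- A chain that may follow `B` can be replaced by one of the same length that may follow `A`, at an
extra cost controlled by `hot A B`. The first vector is cut down to lie below `A - 1` and the rest
is treated recursively; the extra cost telescopes because moving down by `b` items divides values
by `q`. -/
lemma shift : ∀ (l : List (ZMod f → ℤ)) (A B : ZMod f → ℤ), S.NCh (B - 1) l → S.Feas A →
    S.Above l.length A → ∃ l', S.NCh (A - 1) l' ∧ l'.length = l.length ∧
      ((S.q : ℤ) - 1) * S.cost l' ≤ ((S.q : ℤ) - 1) * S.cost l + ∑ s, (S.hot A B s : ℤ)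
  | [], A, B, _, _, _ => ⟨[], trivial, rfl, by
      simp only [le_add_iff_nonneg_right]; positivity⟩
  | R :: l2, A, B, ⟨h1, h2, h3⟩, hA, hAb => by
    have hq : (2 : ℤ) ≤ S.q := by exact_mod_cast S.q_ge
    have hR := NCh.above S h2 h3
    obtain ⟨Q, b1, b2, b3, b4⟩ := S.exists_ext (R ⊓ (A - 1))
      (hR.inf S (Above.sub_one S hAb))
    have hQR : Q ≤ R := b1.trans inf_le_left
    have hQA : Q ≤ A - 1 := b1.trans inf_le_right
    have key : ∀ s, S.cnt Q s ≤ S.cap s ∧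
        ((S.q : ℤ) - 1) * S.g s (S.cnt Q s).toNat + S.hot Q R s ≤
        ((S.q : ℤ) - 1) * S.g s (S.cnt R s).toNat + S.hot A B s := by
      intro s
      have hpos : (0 : ℤ) ≤ ((S.q : ℤ) - 1) * S.g s (S.cnt R s).toNat :=
        mul_nonneg (by linarith) (by positivity)
      rcases b4 s with h | h
      · refine ⟨by rw [h]; positivity, ?_⟩
        have := S.hot_le Q R s
        rw [h] at this ⊢
        simp only [Int.toNat_zero, g_zero, nonpos_iff_eq_zero] at this ⊢
        rw [this]
        simp only [Nat.cast_zero, mul_zero, add_zero]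
        positivity
      · simp only [Pi.inf_apply, Pi.sub_apply, Pi.one_apply] at h
        by_cases hh : R (s - 1) ≤ A (s - 1) - 1
        · rw [min_eq_left hh] at h
          have hle := S.cnt_mono_left (hQR s) h
          refine ⟨hle.trans (h2 s).2, ?_⟩
          have h5 : S.hot Q R s = 0 := by simp [hot, h]
          have h6 : (S.g s (S.cnt Q s).toNat : ℤ) ≤ S.g s (S.cnt R s).toNat := by
            exact_mod_cast S.g_mono s (Int.toNat_le_toNat hle)
          rw [h5]
          have := mul_le_mul_of_nonneg_left h6 (show (0 : ℤ) ≤ (S.q : ℤ) - 1 by linarith)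
          have : (0 : ℤ) ≤ S.hot A B s := by positivity
          push_cast
          linarith
        · push Not at hh
          rw [min_eq_right hh.le] at h
          have hle := S.cnt_le_sub (hQA s) h
          refine ⟨by have := (hA s).2; omega, ?_⟩
          have h7 : A (s - 1) < B (s - 1) := by
            have := h1 (s - 1)
            simp only [Pi.sub_apply, Pi.one_apply] at this
            omega
          have h5 : S.hot A B s = S.q * S.g s ((S.cnt A s).toNat - S.b) := by simp [hot, h7]
          have h6 : (S.g s (S.cnt Q s).toNat : ℤ) ≤ S.g s ((S.cnt A s).toNat - S.b) := by
            exact_mod_cast S.g_mono s (by omega)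
          have h8 : (S.hot Q R s : ℤ) ≤ S.g s (S.cnt Q s).toNat := by
            exact_mod_cast S.hot_le Q R s
          rw [h5]
          push_cast
          nlinarith
    have hQf : S.Feas Q := fun s => ⟨b3 s, (key s).1⟩
    obtain ⟨l', c1, c2, c3⟩ := shift l2 Q R h3 hQf b2
    refine ⟨Q :: l', ⟨hQA, hQf, c1⟩, by simp [c2], ?_⟩
    have hsum := Finset.sum_le_sum fun s (_ : s ∈ Finset.univ) => (key s).2
    simp only [Finset.sum_add_distrib, ← Finset.mul_sum] at hsum
    simp only [cost, List.map_cons, List.sum_cons, G] at c3 ⊢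
    push_cast at c3 hsum ⊢
    linarith

end ItemSystem

/-! ### Exchange arguments for optimal chains -/

namespace ItemSystem
variable {f : ℕ} (S : ItemSystem f) [NeZero f]

lemma inf_sup_aux (n n' : ZMod f → ℤ) (s : ZMod f) :
    S.cnt (n ⊓ n') s + S.cnt (n ⊔ n') s = S.cnt n s + S.cnt n' s ∧
    ((S.cnt n s ≤ S.cnt (n ⊓ n') s ∧ S.cnt (n ⊓ n') s ≤ S.cnt n' s) ∨
     (S.cnt n' s ≤ S.cnt (n ⊓ n') s ∧ S.cnt (n ⊓ n') s ≤ S.cnt n s)) := by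
  simp only [cnt, Pi.inf_apply, Pi.sup_apply]
  have hp : (0 : ℤ) ≤ S.p := by positivity
  rcases le_total (n s) (n' s) with h1 | h1 <;>
  rcases le_total (n (s - 1)) (n' (s - 1)) with h2 | h2 <;>
  have h3 := mul_le_mul_of_nonneg_left h1 hp <;>
  simp only [h1, h2, inf_of_le_left, inf_of_le_right, sup_of_le_left, sup_of_le_right] <;>
  refine ⟨by first | trivial | ring, ?_⟩ <;>
  by_cases h4 : (S.p : ℤ) * n s - n (s - 1) ≤ S.p * n' s - n' (s - 1) <;>
  first
  | (left; constructor <;> linarith)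
  | (right; constructor <;> linarith)

lemma Feas.inf {n n' : ZMod f → ℤ} (h : S.Feas n) (h' : S.Feas n') : S.Feas (n ⊓ n') := by
  intro s
  have := S.inf_sup_aux n n' s
  have := h s
  have := h' s
  omega

lemma Feas.sup {n n' : ZMod f → ℤ} (h : S.Feas n) (h' : S.Feas n') : S.Feas (n ⊔ n') := by
  intro s
  have := S.inf_sup_aux n n' s
  have := h s
  have := h' s
  omega

/-- The value function is submodular, by convexity of each `g s`. -/
lemma G_inf_add_sup {n n' : ZMod f → ℤ} (h : S.Feas n) (h' : S.Feas n') :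
    S.G (n ⊓ n') + S.G (n ⊔ n') ≤ S.G n + S.G n' := by
  simp only [G, ← Finset.sum_add_distrib]
  apply Finset.sum_le_sum
  intro s _
  obtain ⟨h1, h2 | h2⟩ := S.inf_sup_aux n n' s
  · exact S.g_convex s (h s).1 h2.1 h2.2 (by linarith)
  · rw [add_comm (S.g s (S.cnt n s).toNat)]
    exact S.g_convex s (h' s).1 h2.1 h2.2 (by linarith)

/-- The chain `l` below `M` has least cost among the chains of its length below `M`. -/
def Opt (M : ZMod f → ℤ) (l : List (ZMod f → ℤ)) : Prop :=
  S.NCh M l ∧ ∀ l', S.NCh M l' → l'.length = l.length → S.cost l ≤ S.cost l'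

lemma cost_cons (B : ZMod f → ℤ) (l : List (ZMod f → ℤ)) :
    S.cost (B :: l) = S.G B + S.cost l := by simp [cost]

/-- The head `B` of an optimal chain cannot be replaced by a smaller feasible vector `A` whose gain
in value exceeds the loss allowed by `shift`. -/
lemma improve {M A B : ZMod f → ℤ} {l : List (ZMod f → ℤ)} (hO : S.Opt M (B :: l)) (hAB : A ≤ B)
    (hA : S.Feas A) (hAb : S.Above l.length A)
    (hlt : ∑ s, (((S.q : ℤ) - 1) * S.g s (S.cnt A s).toNat + S.hot A B s) <
      ∑ s, ((S.q : ℤ) - 1) * S.g s (S.cnt B s).toNat) : False := by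
  have hq : (2 : ℤ) ≤ S.q := by exact_mod_cast S.q_ge
  obtain ⟨⟨h1, h2, h3⟩, hmin⟩ := hO
  obtain ⟨l', c1, c2, c3⟩ := S.shift l A B h3 hA hAb
  have := hmin (A :: l') ⟨hAB.trans h1, hA, c1⟩ (by simp [c2])
  rw [cost_cons, cost_cons] at this
  simp only [Finset.sum_add_distrib, ← Finset.mul_sum] at hlt
  have hG : ∀ m, (S.G m : ℤ) = ∑ s, (S.g s (S.cnt m s).toNat : ℤ) := by intro m; simp [G]
  rw [← hG, ← hG] at hlt
  have h5 : (S.G B : ℤ) + S.cost l ≤ S.G A + S.cost l' := by exact_mod_cast this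
  nlinarith

/-- The head of an optimal chain of nonzero value cannot be lowered in all coordinates at once while
still starting a chain of the same length. -/
lemma whole {M A0 B : ZMod f → ℤ} {l : List (ZMod f → ℤ)} (hO : S.Opt M (B :: l))
    (h0 : S.Above l.length A0) (hAB : A0 ≤ B - 1) (t : ZMod f) (ht : 0 < S.cnt B t) : False := by
  have hq : (2 : ℤ) ≤ S.q := by exact_mod_cast S.q_ge
  obtain ⟨A, b1, b2, b3, b4⟩ := S.exists_ext (B - 1) (h0.mono S le_rfl hAB)
  have hB := hO.1.2.1
  have hlt : ∀ s, S.cnt A s = 0 ∨ S.cnt A s ≤ S.cnt B s - S.b := by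
    intro s
    rcases b4 s with h | h
    · exact Or.inl h
    · exact Or.inr (S.cnt_le_sub (b1 s) h)
  have hle : ∀ s, S.cnt A s ≤ S.cap s := by
    intro s
    have := hB s
    rcases hlt s with h | h <;> omega
  have hterm : ∀ s, (S.q : ℤ) * S.g s (S.cnt A s).toNat ≤ S.g s (S.cnt B s).toNat := by
    intro s
    have h2 : S.q * S.g s (S.cnt A s).toNat ≤ S.g s (S.cnt B s).toNat := by
      refine le_trans (Nat.mul_le_mul_left _ (S.g_mono s ?_)) (S.q_mul_g_sub_le s _)
      have := hB s
      rcases hlt s with h | h <;> omega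
    exact_mod_cast h2
  have htermt : (S.q : ℤ) * S.g t (S.cnt A t).toNat < S.g t (S.cnt B t).toNat := by
    have h2 : S.q * S.g t (S.cnt A t).toNat < S.g t (S.cnt B t).toNat := by
      refine lt_of_le_of_lt (Nat.mul_le_mul_left _ (S.g_mono t ?_)) (S.q_mul_g_sub_lt t (c := (S.cnt B t).toNat) (by omega))
      have := hB t
      rcases hlt t with h | h <;> omega
    exact_mod_cast h2
  have hhot : ∀ s, (S.hot A B s : ℤ) ≤ S.g s (S.cnt A s).toNat := fun s => by
    exact_mod_cast S.hot_le A B s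
  have hgB : ∀ s, (0 : ℤ) ≤ S.g s (S.cnt B s).toNat := fun s => by positivity
  refine S.improve hO (b1.trans (by intro s; simp)) (fun s => ⟨b3 s, hle s⟩) b2 ?_
  apply Finset.sum_lt_sum
  · intro s _
    have := hterm s
    have := hhot s
    have := hgB s
    nlinarith
  · refine ⟨t, Finset.mem_univ _, ?_⟩
    have := hhot t
    have := hgB t
    nlinarith

set_option maxHeartbeats 1000000 in
/-- The head `B` of an optimal chain cannot be lowered along the cyclic interval `T = [t, i - 1]`
while still starting a chain of the same length, if the item freed at `t` has larger exponent than
the item that becomes necessary at `i`. -/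
lemma interval {M A0 B : ZMod f → ℤ} {l : List (ZMod f → ℤ)} (hO : S.Opt M (B :: l))
    (h0 : S.Above l.length A0) (hAB : A0 ≤ B) (T : Set (ZMod f)) (hT : ∀ s ∈ T, A0 s < B s)
    (t i : ZMod f) (htT : t ∈ T) (htT' : t - 1 ∉ T) (hiT : i ∉ T)
    (h1T : ∀ s ∈ T, s - 1 ∈ T ∨ s = t) (h2T : ∀ s, s - 1 ∈ T → s ∈ T ∨ s = i)
    (hcap : S.cnt B i < S.cap i) (hct : 0 < S.cnt B t)
    (he : S.e i (S.cnt B i).toNat < S.e t ((S.cnt B t).toNat - 1)) : False := by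
  have hti : t ≠ i := fun h => hiT (h ▸ htT)
  have hf2 : 2 ≤ f := by
    by_contra hc
    have : f = 1 := by have := NeZero.pos f; omega
    subst this
    exact hti (Subsingleton.elim _ _)
  have hp2 := S.p_ge
  have hq4 : 4 ≤ S.q := by
    calc 4 = 2 ^ 2 := by norm_num
      _ ≤ S.p ^ 2 := Nat.pow_le_pow_left hp2 2
      _ ≤ S.p ^ f := Nat.pow_le_pow_right S.p_pos hf2
  have hq : (4 : ℤ) ≤ S.q := by exact_mod_cast hq4
  set m0 : ZMod f → ℤ := fun s => if s ∈ T then B s - 1 else B s with hm0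
  have hm0T : ∀ s ∈ T, m0 s = B s - 1 := fun s hs => by simp [hm0, hs]
  have hm0N : ∀ s, s ∉ T → m0 s = B s := fun s hs => by simp [hm0, hs]
  have hA0m : A0 ≤ m0 := by
    intro s
    change A0 s ≤ m0 s
    by_cases hs : s ∈ T
    · rw [hm0T s hs]; have := hT s hs; omega
    · rw [hm0N s hs]; exact hAB s
  obtain ⟨A, b1, b2, b3, b4⟩ := S.exists_ext m0 (h0.mono S le_rfl hA0m)
  have hB := hO.1.2.1
  have hm0B : m0 ≤ B := by
    intro s
    change m0 s ≤ B s
    by_cases hs : s ∈ T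
    · rw [hm0T s hs]; omega
    · rw [hm0N s hs]
  have hAB' := b1.trans hm0B
  -- `w` is the value of the item freed at `t`, `y` that of the item added at `i`, and `X` bounds
  -- `q - 1` times the extra expense at `i`, in `A` and in the rest of the chain
  set w : ℤ := (S.p : ℤ) ^ S.e t ((S.cnt B t).toNat - 1) with hw
  set y : ℤ := (S.p : ℤ) ^ S.e i (S.cnt B i).toNat with hy
  set X : ℤ := ((S.q : ℤ) - 1) * y + S.q * S.g i ((S.cnt B i).toNat + 1 - S.b) with hX
  have hy0 : 0 < y := by have := S.p_pos; positivity
  have hwy : (S.p : ℤ) * y ≤ w := by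
    rw [hw, hy, ← pow_succ']
    exact pow_le_pow_right₀ (by exact_mod_cast S.p_pos) he
  have hgw : S.g t ((S.cnt B t).toNat - 1) + w = S.g t (S.cnt B t).toNat := by
    have := S.g_succ t ((S.cnt B t).toNat - 1)
    rw [show (S.cnt B t).toNat - 1 + 1 = (S.cnt B t).toNat by omega] at this
    rw [this]; push_cast; rfl
  have hXw : X < ((S.q : ℤ) - 1) * w := by
    have h1 : ((S.q : ℤ)) * S.g i ((S.cnt B i).toNat + 1 - S.b) ≤
        S.g i ((S.cnt B i).toNat + 1 - S.b) + S.b * y := by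
      have := S.g_sub_le_top i (S.cnt B i).toNat
      rw [hy]; exact_mod_cast this
    have hpb : (S.p : ℤ) = S.b + 1 := by exact_mod_cast S.hpb
    have hb : (1 : ℤ) ≤ S.b := by exact_mod_cast S.hb
    set gg : ℤ := (S.g i ((S.cnt B i).toNat + 1 - S.b) : ℤ) with hgg
    rw [hpb] at hwy
    have h2 : ((S.q : ℤ) - 1) * gg ≤ S.b * y := by linarith
    have h3 : (S.q : ℤ) * (S.b * y) < ((S.q : ℤ) - 1) * ((S.q : ℤ) - 1) * (S.b * y) := by
      apply mul_lt_mul_of_pos_right _ (by positivity)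
      nlinarith
    have h4 : ((S.q : ℤ) - 1) * X < ((S.q : ℤ) - 1) * (((S.q : ℤ) - 1) * w) := by
      have h5 : ((S.q : ℤ) - 1) * X = ((S.q : ℤ) - 1) * ((S.q : ℤ) - 1) * y +
        S.q * (((S.q : ℤ) - 1) * gg) := by rw [hX]; ring
      have h6 : S.q * (((S.q : ℤ) - 1) * gg) ≤ S.q * (S.b * y) :=
        mul_le_mul_of_nonneg_left h2 (by linarith)
      have h7 : ((S.q : ℤ) - 1) * ((S.q : ℤ) - 1) * ((S.b + 1) * y) ≤
          ((S.q : ℤ) - 1) * ((S.q : ℤ) - 1) * w :=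
        mul_le_mul_of_nonneg_left hwy (by nlinarith)
      nlinarith
    exact lt_of_mul_lt_mul_left h4 (by linarith)
  have hhot : ∀ s, (S.hot A B s : ℤ) ≤ S.g s (S.cnt A s).toNat := fun s => by
    exact_mod_cast S.hot_le A B s
  have key : ∀ s, S.cnt A s ≤ S.cap s ∧
      ((S.q : ℤ) - 1) * S.g s (S.cnt A s).toNat + S.hot A B s +
        (if s = t then ((S.q : ℤ) - 1) * w else 0) ≤
      ((S.q : ℤ) - 1) * S.g s (S.cnt B s).toNat + (if s = i then X else 0) := by
    intro s
    have hBs := hB s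
    have hAs := b3 s
    have hg0 : (0 : ℤ) ≤ S.g s (S.cnt B s).toNat := by positivity
    have hX0 : (0 : ℤ) ≤ if s = i then X else 0 := by
      split_ifs
      · rw [hX]
        have : (0 : ℤ) ≤ ((S.q : ℤ) - 1) * y := mul_nonneg (by linarith) hy0.le
        positivity
      · exact le_rfl
    rcases b4 s with h | h
    · refine ⟨by omega, ?_⟩
      have := hhot s
      rw [h] at this ⊢
      simp only [Int.toNat_zero, g_zero, Nat.cast_zero, mul_zero, zero_add] at this ⊢
      have h9 : (0 : ℤ) ≤ ((S.q : ℤ) - 1) * S.g s (S.cnt B s).toNat :=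
        mul_nonneg (by linarith) hg0
      by_cases hst : s = t
      · subst hst
        rw [if_pos rfl]
        have : (0 : ℤ) ≤ ((S.q : ℤ) - 1) * S.g s ((S.cnt B s).toNat - 1) :=
          mul_nonneg (by linarith) (by positivity)
        rw [← hgw, mul_add]
        linarith
      · rw [if_neg hst]; linarith
    · by_cases hs1 : s - 1 ∈ T
      · have hst : s ≠ t := by rintro rfl; exact htT' hs1
        rw [if_neg hst]
        rw [hm0T _ hs1] at h
        rcases h2T s hs1 with hs | rfl
        · have hle := S.cnt_le_sub (by rw [← hm0T s hs]; exact b1 s) h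
          refine ⟨by omega, ?_⟩
          have h2 : S.q * S.g s (S.cnt A s).toNat ≤ S.g s (S.cnt B s).toNat :=
            le_trans (Nat.mul_le_mul_left _ (S.g_mono s (by omega))) (S.q_mul_g_sub_le s _)
          have h2' : (S.q : ℤ) * S.g s (S.cnt A s).toNat ≤ S.g s (S.cnt B s).toNat := by
            exact_mod_cast h2
          have := hhot s
          nlinarith
        · rw [if_pos rfl]
          have hle : S.cnt A s ≤ S.cnt B s + 1 := by
            simp only [cnt, h]
            have : (S.p : ℤ) * A s ≤ S.p * B s :=
              mul_le_mul_of_nonneg_left (hAB' s) (by positivity)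
            linarith
          refine ⟨by omega, ?_⟩
          have h2 : (S.g s (S.cnt A s).toNat : ℤ) ≤ S.g s (S.cnt B s).toNat + y := by
            have := S.g_mono s (show (S.cnt A s).toNat ≤ (S.cnt B s).toNat + 1 by omega)
            rw [g_succ] at this
            rw [hy]; exact_mod_cast this
          have h3 : (S.hot A B s : ℤ) ≤ S.q * S.g s ((S.cnt B s).toNat + 1 - S.b) := by
            have : S.hot A B s ≤ S.q * S.g s ((S.cnt B s).toNat + 1 - S.b) := by
              unfold hot
              split_ifs
              · exact Nat.mul_le_mul_left _ (S.g_mono s (by omega))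
              · positivity
            exact_mod_cast this
          have h4 := mul_le_mul_of_nonneg_left h2 (show (0 : ℤ) ≤ (S.q : ℤ) - 1 by linarith)
          rw [hX]
          linarith
      · rw [hm0N _ hs1] at h
        have hh : S.hot A B s = 0 := by simp [hot, h]
        rw [hh]
        have hle := S.cnt_mono_left (hAB' s) h
        refine ⟨by omega, ?_⟩
        by_cases hst : s = t
        · subst hst
          rw [if_pos rfl]
          have hle2 : S.cnt A s ≤ S.cnt B s - 1 := by
            simp only [cnt, h]
            have h5 : A s ≤ B s - 1 := by rw [← hm0T s htT]; exact b1 s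
            have : (S.p : ℤ) * A s ≤ S.p * (B s - 1) :=
              mul_le_mul_of_nonneg_left h5 (by positivity)
            have : (2 : ℤ) ≤ S.p := by exact_mod_cast hp2
            linarith
          have h2 : (S.g s (S.cnt A s).toNat : ℤ) ≤ S.g s ((S.cnt B s).toNat - 1) := by
            exact_mod_cast S.g_mono s (by omega)
          have h4 := mul_le_mul_of_nonneg_left h2 (show (0 : ℤ) ≤ (S.q : ℤ) - 1 by linarith)
          rw [← hgw, mul_add]
          push_cast
          linarith
        · rw [if_neg hst]
          have h2 : (S.g s (S.cnt A s).toNat : ℤ) ≤ S.g s (S.cnt B s).toNat := by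
            exact_mod_cast S.g_mono s (by omega)
          have h4 := mul_le_mul_of_nonneg_left h2 (show (0 : ℤ) ≤ (S.q : ℤ) - 1 by linarith)
          push_cast
          linarith
  refine S.improve hO hAB' (fun s => ⟨b3 s, (key s).1⟩) b2 ?_
  have hsum := Finset.sum_le_sum fun s (_ : s ∈ Finset.univ) => (key s).2
  rw [Finset.sum_add_distrib, Finset.sum_add_distrib (g := fun s => if s = i then X else 0),
    Finset.sum_ite_eq' Finset.univ t, Finset.sum_ite_eq' Finset.univ i] at hsum
  simp only [Finset.mem_univ, if_true] at hsum
  linarith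

end ItemSystem

/-! ### Uniqueness and nesting of optimal chains -/

namespace ItemSystem
variable {f : ℕ} (S : ItemSystem f) [NeZero f]

/-- The head of an optimal chain has least value among all feasible vectors below `M` that can start
a chain of the same length. By submodularity the cheapest such vector `A0` lies below `B`; if it is
strictly cheaper, the largest item it saves is of some type `t`, and `B` is lowered either in all
coordinates (`whole`) or from `t` up to the first type where `A0` has more items (`interval`). -/
lemma Opt.head_le {M B A : ZMod f → ℤ} {l : List (ZMod f → ℤ)} (hO : S.Opt M (B :: l))
    (hA : S.Feas A) (hAM : A ≤ M) (hAb : S.Above l.length A) : S.G B ≤ S.G A := by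
  obtain ⟨hBM, hB, hl⟩ := hO.1
  have hBab := NCh.above S hB hl
  -- a vector of least value among the admissible heads
  obtain ⟨A0, ⟨a1, a2, a3⟩, amin⟩ : ∃ A0, (S.Feas A0 ∧ A0 ≤ M ∧ S.Above l.length A0) ∧
      ∀ A', (S.Feas A' ∧ A' ≤ M ∧ S.Above l.length A') → S.G A0 ≤ S.G A' := by
    obtain ⟨A0, h1, h2⟩ := WellFounded.has_min (measure S.G).wf
      {A' | S.Feas A' ∧ A' ≤ M ∧ S.Above l.length A'} ⟨A, hA, hAM, hAb⟩
    exact ⟨A0, h1, fun A' h => not_lt.1 (h2 A' h)⟩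
  refine le_trans ?_ (amin A ⟨hA, hAM, hAb⟩)
  by_contra hlt
  push Not at hlt
  have hAB : A0 ≤ B := by
    have h1 : S.G A0 ≤ S.G (A0 ⊓ B) :=
      amin _ ⟨a1.inf S hB, inf_le_left.trans a2, a3.inf S hBab⟩
    have h2 := S.G_inf_add_sup a1 hB
    have h3 : S.G B ≤ S.G (A0 ⊔ B) := by
      have := hO.2 ((A0 ⊔ B) :: l) ⟨sup_le a2 hBM, a1.sup S hB, NCh.mono S (by
        intro s
        simp only [Pi.sub_apply, Pi.one_apply, Pi.sup_apply]
        have := le_max_right (A0 s) (B s)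
        omega) hl⟩ rfl
      rw [cost_cons, cost_cons] at this
      omega
    have h4 : B = A0 ⊔ B := S.G_inj hB (a1.sup S hB) (by omega)
    rw [h4]; exact le_sup_left
  obtain ⟨t, ht, htop⟩ := S.exists_top (fun s => (S.cnt B s).toNat) (fun s => (S.cnt A0 s).toNat) hlt
  have hp : (2 : ℤ) ≤ S.p := by exact_mod_cast S.p_ge
  have hδt : A0 t < B t := by
    have h1 : S.cnt A0 t < S.cnt B t := by have := a1 t; omega
    simp only [cnt] at h1
    have := hAB (t - 1)
    have := hAB t
    by_contra hc
    nlinarith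
  have hstep : ∀ s, (S.cnt A0 s).toNat ≤ (S.cnt B s).toNat → A0 (s - 1) < B (s - 1) →
      A0 s < B s := by
    intro s h1 h2
    have h3 : S.cnt A0 s ≤ S.cnt B s := by have := hB s; omega
    simp only [cnt] at h3
    by_contra hc
    nlinarith
  by_cases hn : ∃ n : ℕ, (S.cnt B (t + n)).toNat < (S.cnt A0 (t + n)).toNat
  · set n := Nat.find hn with hnn
    have hns := Nat.find_spec hn
    rw [← hnn] at hns
    have hmin : ∀ j < n, (S.cnt A0 (t + j)).toNat ≤ (S.cnt B (t + j)).toNat :=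
      fun j hj => not_lt.1 (Nat.find_min hn hj)
    have hpos : ∀ j < n, A0 (t + j) < B (t + j) := by
      intro j
      induction j with
      | zero => intro _; simpa using hδt
      | succ j ih =>
        intro hj
        apply hstep _ (hmin _ hj)
        have : t + ((j + 1 : ℕ) : ZMod f) - 1 = t + j := by push_cast; ring
        rw [this]
        exact ih (by omega)
    have hn0 : 0 < n := by
      rcases Nat.eq_zero_or_pos n with h | h
      · rw [h] at hns; simp only [Nat.cast_zero, add_zero] at hns ht; omega
      · exact h
    have hnot : ∀ j < n, t + (j : ZMod f) ≠ t + n := by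
      intro j hj h
      have := hmin j hj
      rw [h] at this
      omega
    refine S.interval hO a3 hAB {s | ∃ j < n, s = t + (j : ℕ)} ?_ t (t + n) ⟨0, hn0, by simp⟩
      ?_ ?_ ?_ ?_ ?_ ?_ (htop _ hns)
    · rintro s ⟨j, hj, rfl⟩
      exact hpos j hj
    · rintro ⟨j, hj, h⟩
      have h1 : ((j + 1 : ℕ) : ZMod f) = 0 := by
        push_cast; linear_combination -h
      apply hnot (n - (j + 1)) (by omega)
      rw [Nat.cast_sub (by omega), h1, sub_zero]
    · rintro ⟨j, hj, h⟩
      exact hnot j hj h.symm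
    · rintro s ⟨j, hj, rfl⟩
      rcases Nat.eq_zero_or_pos j with rfl | h0
      · right; simp
      · left
        exact ⟨j - 1, by omega, by rw [Nat.cast_sub (by omega)]; push_cast; ring⟩
    · rintro s ⟨j, hj, h⟩
      have h1 : s = t + ((j + 1 : ℕ) : ZMod f) := by push_cast; linear_combination h
      rcases Nat.lt_or_ge (j + 1) n with h2 | h2
      · exact Or.inl ⟨j + 1, h2, h1⟩
      · right; rw [h1, show j + 1 = n by omega]
    · have h1 := (a1 (t + n)).2
      have h2 := (hB (t + n)).1
      omega
    · have := (hB t).1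
      omega
  · push Not at hn
    have hall := circle (P := fun s => A0 s < B s) t hδt (by
      intro s
      apply hstep
      have := hn (s - t).val
      rwa [ZMod.natCast_zmod_val, add_sub_cancel] at this)
    exact S.whole hO a3 (fun s => by
      have := hall s
      simp only [Pi.sub_apply, Pi.one_apply]
      omega) t (by omega)

lemma Opt.tail {M B : ZMod f → ℤ} {l : List (ZMod f → ℤ)} (hO : S.Opt M (B :: l)) :
    S.Opt (B - 1) l := by
  refine ⟨hO.1.2.2, fun l' h1 h2 => ?_⟩
  have := hO.2 (B :: l') ⟨hO.1.1, hO.1.2.1, h1⟩ (by simp [h2])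
  rw [cost_cons, cost_cons] at this
  omega

/-- Two optimal chains of the same length coincide: by `Opt.head_le` their heads have the same value,
and the value determines the vector. -/
lemma Opt.unique : ∀ {l l' : List (ZMod f → ℤ)} {M : ZMod f → ℤ}, S.Opt M l → S.Opt M l' →
    l.length = l'.length → l = l'
  | [], [], _, _, _, _ => rfl
  | [], _ :: _, _, _, _, h => by simp at h
  | _ :: _, [], _, _, _, h => by simp at h
  | B :: l, B' :: l', M, hO, hO', h => by
    have hlen : l.length = l'.length := by simpa using h
    obtain ⟨hBM, hB, hl⟩ := hO.1
    obtain ⟨hBM', hB', hl'⟩ := hO'.1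
    have h1 := Opt.head_le S hO hB' hBM' (by rw [hlen]; exact NCh.above S hB' hl')
    have h2 := Opt.head_le S hO' hB hBM (by rw [← hlen]; exact NCh.above S hB hl)
    have h3 : B = B' := S.G_inj hB hB' (le_antisymm h1 h2)
    subst h3
    rw [Opt.unique (Opt.tail S hO) (Opt.tail S hO') hlen]

lemma exists_chain : ∀ (h : ℕ) (m : ZMod f → ℤ), S.Feas m → S.Above h m →
    ∃ l, S.NCh (m - 1) l ∧ l.length = h
  | 0, _, _, _ => ⟨[], trivial, rfl⟩
  | h + 1, m, hm, hA => by
    obtain ⟨m', b1, b2, b3, b4⟩ := S.exists_ext (m - 1) (Above.sub_one S hA)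
    have hm' : S.Feas m' := by
      intro s
      refine ⟨b3 s, ?_⟩
      rcases b4 s with h | h
      · rw [h]; positivity
      · have := S.cnt_le_sub (b1 s) h
        have := hm s
        omega
    obtain ⟨l, h1, h2⟩ := exists_chain h m' hm' b2
    exact ⟨m' :: l, ⟨b1, hm', h1⟩, by simp [h2]⟩

lemma feas_zero : S.Feas 0 := by intro s; simp [cnt]

lemma exists_opt (d : ℕ) (hA : S.Above d 0) : ∃ l, S.Opt 0 l ∧ l.length = d + 1 := by
  obtain ⟨l, h1, h2⟩ := S.exists_chain d 0 S.feas_zero hA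
  obtain ⟨l0, ⟨h3, h4⟩, h5⟩ := WellFounded.has_min (measure S.cost).wf
      {l | S.NCh 0 l ∧ l.length = d + 1} ⟨0 :: l, ⟨le_rfl, S.feas_zero, h1⟩, by simp [h2]⟩
  exact ⟨l0, ⟨h3, fun l' h h' => not_lt.1 (h5 l' ⟨h, h'.trans h4⟩)⟩, h4⟩

/-- If `μ ≥ 1` is the difference of two consecutive vectors of a chain and the second one has more
items of type `s`, then there is a `δ ≥ 0` with `2 * δ ≤ μ - 1` whose transfer from the first
vector to the second moves all item counts towards each other. A minimal solution of the
inequalities satisfied by `⌊(μ - 1) / 2⌋` has the required properties. -/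
lemma exists_transfer (μ : ZMod f → ℤ) (hμ : ∀ i, 1 ≤ μ i) (s : ZMod f)
    (hs : (S.p : ℤ) * μ s - μ (s - 1) < 0) :
    ∃ δ : ZMod f → ℤ, (∀ i, 0 ≤ δ i) ∧ (∀ i, 2 * δ i ≤ μ i - 1) ∧
      (∀ i, i ≠ s → 0 ≤ (S.p : ℤ) * δ i - δ (i - 1) ∧
        (S.p : ℤ) * δ i - δ (i - 1) ≤ max ((S.p : ℤ) * μ i - μ (i - 1)) 0) ∧
      (S.p : ℤ) * δ s - δ (s - 1) = -1 := by
  have hp : (2 : ℤ) ≤ S.p := by exact_mod_cast S.p_ge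
  set β : ZMod f → ℤ := fun i => if i = s then -1 else max ((S.p : ℤ) * μ i - μ (i - 1)) 0 with hβ
  let D : Set (ZMod f → ℤ) := {δ | (∀ i, 0 ≤ δ i) ∧ (∀ i, 2 * δ i ≤ μ i - 1) ∧
    ∀ i, (S.p : ℤ) * δ i - δ (i - 1) ≤ β i}
  have hD : D.Nonempty := by
    refine ⟨fun i => (μ i - 1) / 2, fun i => ?_, fun i => ?_, fun i => ?_⟩
    · have := hμ i; simp only; omega
    · simp only; omega
    · simp only
      have h1 : 2 * ((μ i - 1) / 2) ≤ μ i - 1 := by omega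
      have h2 : μ (i - 1) - 2 ≤ 2 * ((μ (i - 1) - 1) / 2) := by omega
      have h3 := mul_le_mul_of_nonneg_left h1 (show (0 : ℤ) ≤ S.p by linarith)
      by_cases hi : i = s
      · subst hi
        simp only [hβ, if_true]
        by_contra hc
        nlinarith
      · simp only [hβ, hi, if_false]
        rcases le_total ((S.p : ℤ) * μ i - μ (i - 1)) 0 with h | h
        · rw [max_eq_right h]; linarith
        · rw [max_eq_left h]; linarith
  obtain ⟨δ, ⟨d1, d2, d3⟩, dmin⟩ := WellFounded.has_min
    (measure fun δ : ZMod f → ℤ => ∑ i, (δ i).toNat).wf D hD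
  have key : ∀ i, δ (i - 1) = 0 ∨ (S.p : ℤ) * δ i - δ (i - 1) = β i := by
    intro i
    by_contra hc
    push Not at hc
    have h1 : 0 < δ (i - 1) := lt_of_le_of_ne (d1 _) (Ne.symm hc.1)
    have h2 : (S.p : ℤ) * δ i - δ (i - 1) < β i := lt_of_le_of_ne (d3 _) hc.2
    set δ' := Function.update δ (i - 1) (δ (i - 1) - 1) with hδ'
    have hle : ∀ j, δ' j ≤ δ j := by
      intro j
      by_cases hj : j = i - 1
      · subst hj; simp [hδ']
      · simp [hδ', hj]
    refine dmin δ' ⟨?_, ?_, ?_⟩ ?_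
    · intro j
      by_cases hj : j = i - 1
      · subst hj; simp [hδ']; omega
      · simpa [hδ', hj] using d1 j
    · intro j
      have := hle j
      have := d2 j
      omega
    · intro j
      have h3 := mul_le_mul_of_nonneg_left (hle j) (show (0 : ℤ) ≤ S.p by linarith)
      by_cases hj : j = i
      · subst hj
        have : δ' (j - 1) = δ (j - 1) - 1 := by simp [hδ']
        rw [this]; omega
      · have hj' : j - 1 ≠ i - 1 := fun h => hj (sub_left_injective h)
        have : δ' (j - 1) = δ (j - 1) := by simp [hδ', hj']
        rw [this]
        have := d3 j
        linarith
    · change ∑ i, (δ' i).toNat < ∑ i, (δ i).toNat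
      apply Finset.sum_lt_sum
      · intro j _
        exact Int.toNat_le_toNat (hle j)
      · refine ⟨i - 1, Finset.mem_univ _, ?_⟩
        have : δ' (i - 1) = δ (i - 1) - 1 := by simp [hδ']
        rw [this]; omega
  refine ⟨δ, d1, d2, ?_, ?_⟩
  · intro i hi
    have hβi : β i = max ((S.p : ℤ) * μ i - μ (i - 1)) 0 := by simp [hβ, hi]
    refine ⟨?_, hβi ▸ d3 i⟩
    rcases key i with h | h
    · rw [h]; have := d1 i; nlinarith
    · rw [h, hβi]; exact le_max_right _ _
  · have hβs : β s = -1 := by simp [hβ]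
    rcases key s with h | h
    · have h1 := d3 s
      have h2 := d1 s
      rw [h, hβs] at h1
      nlinarith
    · rw [h, hβs]

lemma cnt_add (m δ : ZMod f → ℤ) (i : ZMod f) :
    S.cnt (m + δ) i = S.cnt m i + (S.p * δ i - δ (i - 1)) := by
  simp only [cnt, Pi.add_apply]; ring

lemma cnt_sub (m δ : ZMod f → ℤ) (i : ZMod f) :
    S.cnt (m - δ) i = S.cnt m i - (S.p * δ i - δ (i - 1)) := by
  simp only [cnt, Pi.sub_apply]; ring

/-- In an optimal chain the item counts decrease: otherwise moving a transfer vector from `B` to `B'`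
would give a different optimal chain. -/
lemma Opt.nested {M B B' : ZMod f → ℤ} {l : List (ZMod f → ℤ)} (hO : S.Opt M (B :: B' :: l))
    (s : ZMod f) : S.cnt B' s ≤ S.cnt B s := by
  by_contra hc
  push Not at hc
  obtain ⟨hBM, hB, hB'B, hB', hl⟩ := hO.1
  have hb : ∀ i, (S.p : ℤ) * (B - B') i - (B - B') (i - 1) = S.cnt B i - S.cnt B' i := by
    intro i; simp only [cnt, Pi.sub_apply]; ring
  obtain ⟨δ, d1, d2, d3, d4⟩ := S.exists_transfer (B - B') (by
    intro i
    have := hB'B i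
    simp only [Pi.sub_apply, Pi.one_apply] at this ⊢
    omega) s (by rw [hb]; omega)
  have hbet : ∀ i, (S.cnt B' i ≤ S.cnt (B' + δ) i ∧ S.cnt (B' + δ) i ≤ S.cnt B i) ∨
      (S.cnt B i ≤ S.cnt (B' + δ) i ∧ S.cnt (B' + δ) i ≤ S.cnt B' i) := by
    intro i
    rw [cnt_add]
    by_cases hi : i = s
    · subst hi; rw [d4]; right; constructor <;> omega
    · have := d3 i hi
      rw [hb] at this
      rcases le_total (S.cnt B i - S.cnt B' i) 0 with h | h
      · rw [max_eq_right h] at this; right; constructor <;> omega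
      · rw [max_eq_left h] at this; left; constructor <;> omega
  have hsum : ∀ i, S.cnt (B' + δ) i + S.cnt (B - δ) i = S.cnt B' i + S.cnt B i := by
    intro i; rw [cnt_add, cnt_sub]; ring
  have hch : S.NCh M ((B - δ) :: (B' + δ) :: l) := by
    refine ⟨le_trans ?_ hBM, ?_, ?_, ?_, NCh.mono S ?_ hl⟩
    · intro i; have := d1 i; simp only [Pi.sub_apply]; omega
    · intro i
      have := hbet i; have := hsum i; have := hB i; have := hB' i
      omega
    · intro i; have := d2 i; simp only [Pi.sub_apply, Pi.add_apply, Pi.one_apply] at this ⊢; omega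
    · intro i
      have := hbet i; have := hsum i; have := hB i; have := hB' i
      omega
    · intro i; have := d1 i; simp only [Pi.sub_apply, Pi.add_apply, Pi.one_apply] at this ⊢; omega
  have hG : S.G (B' + δ) + S.G (B - δ) ≤ S.G B' + S.G B := by
    simp only [G, ← Finset.sum_add_distrib]
    apply Finset.sum_le_sum
    intro i _
    rcases hbet i with h | h
    · exact S.g_convex i (hB' i).1 h.1 h.2 (by have := hsum i; linarith)
    · rw [add_comm (S.g i (S.cnt B' i).toNat)]
      exact S.g_convex i (hB i).1 h.1 h.2 (by have := hsum i; linarith)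
  have hO' : S.Opt M ((B - δ) :: (B' + δ) :: l) := by
    refine ⟨hch, fun l' h1 h2 => le_trans ?_ (hO.2 l' h1 h2)⟩
    simp only [cost_cons]
    omega
  have := Opt.unique S hO hO' rfl
  simp only [List.cons.injEq] at this
  have h1 : ∀ i, δ i = 0 := by
    intro i
    have := congrFun this.1 i
    simp only [Pi.sub_apply] at this
    omega
  simp [h1] at d4

end ItemSystem

/-! ### The item system of the base-`p` digits of `k` -/

/-- The base-`p` digit of `n` at position `j`. -/
def dg (p n j : ℕ) : ℕ := n / p ^ j % p

/-- The digits of `k`, continued by `p - 1` from position `k` on. All nonzero digits of `k` are at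
positions below `k`, and the continuation provides infinitely many items of each type. -/
def kd (p k j : ℕ) : ℕ := if j < k then dg p k j else p - 1

/-- Number of items of type `s` at positions below `j`. -/
def cntd (p f k : ℕ) (s : ZMod f) (j : ℕ) : ℕ :=
  ∑ i ∈ Finset.range j, if (i : ZMod f) = s then kd p k i else 0

/-- Sum of the digits of `R` at the positions below `k` congruent to `s` modulo `f`. -/
def cN (p f k R : ℕ) (s : ZMod f) : ℕ :=
  ∑ j ∈ Finset.range k, if (j : ZMod f) = s then dg p R j else 0

/-- Sum of the digits of `R` at positions below `k`, weighted cyclically by powers of `p`; for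
`R = k` it is the base-`q` digit sum of `k * p ^ i` with `i ≡ -s - 1` (`digits_sum_eq_US`). -/
def US (p f k R : ℕ) (s : ZMod f) : ℕ :=
  ∑ j ∈ Finset.range k, dg p R j * p ^ ((j : ZMod f) - s - 1).val

section
variable {p f k : ℕ}

lemma dg_lt (hp : 2 ≤ p) (n j : ℕ) : dg p n j < p := Nat.mod_lt _ (by omega)

lemma kd_le (hp : 2 ≤ p) (j : ℕ) : kd p k j ≤ p - 1 := by
  unfold kd
  split_ifs
  · have := dg_lt hp k j; omega
  · exact le_rfl

lemma cntd_succ (s : ZMod f) (j : ℕ) :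
    cntd p f k s (j + 1) = cntd p f k s j + if (j : ZMod f) = s then kd p k j else 0 := by
  simp [cntd, Finset.sum_range_succ]

lemma cntd_mono (s : ZMod f) : Monotone (cntd p f k s) :=
  monotone_nat_of_le_succ fun j => by rw [cntd_succ]; omega

lemma exists_type [NeZero f] (s : ZMod f) (N : ℕ) : ∃ j, N ≤ j ∧ (j : ZMod f) = s := by
  refine ⟨s.val + f * N, ?_, by simp⟩
  have := NeZero.pos f
  nlinarith

lemma exists_lt_cntd [NeZero f] (hp : 2 ≤ p) (s : ZMod f) (x : ℕ) : ∃ j, x < cntd p f k s (j + 1) := by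
  have step : ∀ N, ∃ j, cntd p f k s N < cntd p f k s (j + 1) := by
    intro N
    obtain ⟨j, h1, h2⟩ := exists_type s (max N k)
    refine ⟨j, ?_⟩
    have h3 := cntd_mono (p := p) (k := k) s (le_trans (le_max_left N k) h1)
    have h4 : ¬ j < k := not_lt.2 (le_trans (le_max_right N k) h1)
    rw [cntd_succ, if_pos h2, kd, if_neg h4]
    omega
  induction x with
  | zero => obtain ⟨j, hj⟩ := step 0; exact ⟨j, by omega⟩
  | succ x ih =>
    obtain ⟨j, hj⟩ := ih
    obtain ⟨j', hj'⟩ := step (j + 1)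
    exact ⟨j', by omega⟩

lemma cntd_add_f (hp : 2 ≤ p) (s : ZMod f) (j : ℕ) (hj : (j : ZMod f) = s) :
    ∀ n ≤ f, cntd p f k s (j + n) ≤ cntd p f k s j + (p - 1) := by
  have h1 : ∀ n, n + 1 ≤ f → cntd p f k s (j + (n + 1)) ≤ cntd p f k s j + (p - 1) := by
    intro n
    induction n with
    | zero =>
      intro _
      rw [zero_add, cntd_succ, if_pos hj]
      have := kd_le (k := k) hp j
      omega
    | succ n ih =>
      intro hn
      rw [← add_assoc, cntd_succ, if_neg]
      · have := ih (by omega); omega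
      · intro h
        rw [← hj, Nat.cast_add, add_eq_left, ZMod.natCast_eq_zero_iff] at h
        have := Nat.le_of_dvd (by omega) h
        omega
  intro n hn
  cases n with
  | zero => simp
  | succ n => exact h1 n hn

variable [NeZero f]

/-- Position of the item number `x` of type `s`, counted from `0`. -/
noncomputable def epos (p f k : ℕ) [NeZero f] (hp : 2 ≤ p) (s : ZMod f) (x : ℕ) : ℕ :=
  Nat.find (exists_lt_cntd (k := k) hp s x)

lemma epos_lt (hp : 2 ≤ p) (s : ZMod f) (x : ℕ) : x < cntd p f k s (epos p f k hp s x + 1) :=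
  Nat.find_spec (exists_lt_cntd (k := k) hp s x)

lemma le_epos (hp : 2 ≤ p) (s : ZMod f) (x j : ℕ) : j ≤ epos p f k hp s x ↔ cntd p f k s j ≤ x := by
  constructor
  · intro h
    rcases Nat.eq_zero_or_pos j with rfl | h0
    · simp [cntd]
    · have := Nat.find_min (exists_lt_cntd (k := k) hp s x) (m := j - 1) (by
        unfold epos at h; omega)
      rw [Nat.sub_add_cancel h0] at this
      omega
  · intro h
    by_contra hc
    have h1 := cntd_mono (p := p) (k := k) s (show epos p f k hp s x + 1 ≤ j by omega)
    have := epos_lt (k := k) hp s x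
    omega

lemma epos_eq (hp : 2 ≤ p) (s : ZMod f) {x j : ℕ} (h1 : cntd p f k s j ≤ x)
    (h2 : x < cntd p f k s (j + 1)) : epos p f k hp s x = j := by
  have a := (le_epos (k := k) hp s x j).2 h1
  have b := (le_epos (k := k) hp s x (j + 1)).not.2 (by omega)
  omega

lemma epos_type (hp : 2 ≤ p) (s : ZMod f) (x : ℕ) : ((epos p f k hp s x : ℕ) : ZMod f) = s := by
  by_contra hc
  have h1 := epos_lt (k := k) hp s x
  rw [cntd_succ, if_neg hc] at h1
  have := (le_epos (k := k) hp s x _).1 le_rfl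
  omega

lemma p_mul_pow (p : ℕ) (hp : 2 ≤ p) (x : ZMod f) :
    p * p ^ (x - 1).val = p ^ x.val + if x = 0 then p ^ f - 1 else 0 := by
  obtain ⟨f', rfl⟩ : ∃ f', f = f' + 1 := ⟨f - 1, by have := NeZero.pos f; omega⟩
  have hpos : 0 < p ^ (f' + 1) := by positivity
  split_ifs with h
  · subst h
    rw [zero_sub, ZMod.val_neg_one, ZMod.val_zero, pow_zero, ← pow_succ']
    omega
  · have h1 : x.val = (x - 1).val + 1 := by
      have h0 : 0 < x.val := by
        rcases Nat.eq_zero_or_pos x.val with h0 | h0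
        · exact absurd ((ZMod.val_eq_zero x).1 h0) h
        · exact h0
      have hx := ZMod.val_lt x
      have h2 : x - 1 = ((x.val - 1 : ℕ) : ZMod (f' + 1)) := by
        rw [Nat.cast_sub h0, ZMod.natCast_zmod_val, Nat.cast_one]
      rw [h2, ZMod.val_natCast, Nat.mod_eq_of_lt (by omega)]
      omega
    rw [add_zero, h1, ← pow_succ']

lemma p_mul_US (hp : 2 ≤ p) (R : ℕ) (s : ZMod f) :
    p * US p f k R s = (p ^ f - 1) * cN p f k R s + US p f k R (s - 1) := by
  simp only [US, cN, Finset.mul_sum, ← Finset.sum_add_distrib]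
  apply Finset.sum_congr rfl
  intro j _
  have := p_mul_pow p hp ((j : ZMod f) - s)
  simp only [sub_eq_zero] at this
  rw [show (j : ZMod f) - (s - 1) - 1 = j - s by ring, mul_left_comm, this]
  split_ifs <;> ring

lemma cap_eq (s : ZMod f) : cntd p f k s k = cN p f k k s := by
  apply Finset.sum_congr rfl
  intro j hj
  simp [kd, Finset.mem_range.1 hj]

/-- The item system of `k`: each unit of the digit of `k` at position `j` is an item of type `j` and
value `p ^ j`. -/
noncomputable def sys (p f k : ℕ) [NeZero f] (hp : 2 ≤ p) : ItemSystem f where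
  p := p
  b := p - 1
  hpb := by omega
  hb := by omega
  e := epos p f k hp
  e_mono := by
    intro s x y h
    rw [le_epos]
    exact le_trans ((le_epos hp s x _).1 le_rfl) h
  e_step := by
    intro s x
    rw [le_epos]
    have h1 := cntd_add_f (k := k) hp s _ (epos_type (k := k) hp s x) f le_rfl
    have h2 := (le_epos (k := k) hp s x _).1 le_rfl
    omega
  e_type := epos_type hp
  cap := fun s => cN p f k k s
  U := fun s => US p f k k s
  hU := by
    intro s
    have := p_mul_US (k := k) hp k s
    have hpos : 1 ≤ p ^ f := Nat.one_le_pow _ _ (by omega)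
    zify [hpos] at this
    exact this

lemma dg_sum (hp : 2 ≤ p) : ∀ (n : ℕ) (r : ℕ → ℕ), (∀ i, r i < p) → ∀ j,
    dg p (∑ i ∈ Finset.range n, r i * p ^ i) j = if j < n then r j else 0
  | 0, r, _, j => by simp [dg]
  | n + 1, r, hr, j => by
    have h1 : ∑ i ∈ Finset.range (n + 1), r i * p ^ i =
        r 0 + p * ∑ i ∈ Finset.range n, r (i + 1) * p ^ i := by
      rw [Finset.sum_range_succ', Finset.mul_sum, add_comm]
      congr 1
      · simp
      · apply Finset.sum_congr rfl; intro i _; rw [pow_succ]; ring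
    rw [h1]
    cases j with
    | zero => simp [dg, Nat.mod_eq_of_lt (hr 0)]
    | succ j =>
      have := dg_sum hp n (fun i => r (i + 1)) (fun i => hr _) j
      unfold dg at this ⊢
      rw [pow_succ', ← Nat.div_div_eq_div_mul, Nat.add_mul_div_left _ _ (by omega),
        Nat.div_eq_of_lt (hr 0), zero_add, this]
      simp

lemma sum_dg (R : ℕ) : ∀ n, ∑ i ∈ Finset.range n, dg p R i * p ^ i = R % p ^ n
  | 0 => by simp [Nat.mod_one]
  | n + 1 => by rw [Finset.sum_range_succ, sum_dg R n, Nat.mod_pow_succ, dg, mul_comm]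

lemma sum_dg_eq {R n : ℕ} (h : R < p ^ n) : ∑ i ∈ Finset.range n, dg p R i * p ^ i = R := by
  rw [sum_dg, Nat.mod_eq_of_lt h]

/-- Digitwise domination in base `p`. -/
def dLe (p R k : ℕ) : Prop := ∀ j, dg p R j ≤ dg p k j

lemma dLe.le (hp : 2 ≤ p) {R k : ℕ} (h : dLe p R k) : R ≤ k := by
  have h1 : R < p ^ (R + k) := lt_of_lt_of_le (Nat.lt_pow_self (by omega : 1 < p))
    (Nat.pow_le_pow_right (by omega) (by omega))
  have h2 : k < p ^ (R + k) := lt_of_lt_of_le (Nat.lt_pow_self (by omega : 1 < p))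
    (Nat.pow_le_pow_right (by omega) (by omega))
  calc R = _ := (sum_dg_eq h1).symm
    _ ≤ _ := ?_
    _ = k := sum_dg_eq h2
  exact Finset.sum_le_sum fun i _ => Nat.mul_le_mul_right _ (h i)

lemma dLe.trans {R R' k : ℕ} (h : dLe p R R') (h' : dLe p R' k) : dLe p R k :=
  fun j => (h j).trans (h' j)

lemma dLe.lt_pow (hp : 2 ≤ p) {R : ℕ} (h : dLe p R k) : R < p ^ k :=
  lt_of_le_of_lt (h.le hp) (Nat.lt_pow_self (by omega))

/-- Since `p ^ f ≡ 1`, the weighted digit sums are the multiples of `R` by powers of `p` modulo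
`q - 1`. -/
lemma US_mod {R : ℕ} (h : R < p ^ k) (s : ZMod f) :
    (US p f k R s : ℤ) ≡ R * p ^ (-s - 1).val [ZMOD (p : ℤ) ^ f - 1] := by
  have hpf : (p : ℤ) ^ f ≡ 1 [ZMOD (p : ℤ) ^ f - 1] := by
    apply Int.ModEq.symm; rw [Int.modEq_iff_dvd]
  have hper : ∀ n : ℕ, (p : ℤ) ^ n ≡ p ^ (n % f) [ZMOD (p : ℤ) ^ f - 1] := by
    intro n
    conv_lhs => rw [← Nat.div_add_mod n f, pow_add, pow_mul]
    have := (hpf.pow (n / f)).mul_right ((p : ℤ) ^ (n % f))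
    simpa using this
  conv_rhs => rw [← sum_dg_eq h]
  unfold US
  push_cast
  rw [Finset.sum_mul]
  apply Int.ModEq.sum
  intro j _
  rw [mul_assoc, ← pow_add]
  apply Int.ModEq.mul_left
  refine (hper _).trans (Int.ModEq.trans ?_ (hper _).symm)
  rw [← ZMod.val_natCast, ← ZMod.val_natCast]
  rw [ZMod.natCast_zmod_val, Nat.cast_add, ZMod.natCast_zmod_val]
  rw [show (j : ZMod f) - s - 1 = j + (-s - 1) by ring]
end

/-! ### Vectors and digit-dominated numbers -/

section
variable {p f k : ℕ} [NeZero f]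

/-- How many of the first `c` items of type `s` are at position `j`. -/
def rr (p f k : ℕ) (s : ZMod f) (c j : ℕ) : ℕ :=
  min c (cntd p f k s (j + 1)) - min c (cntd p f k s j)

lemma rr_zero {s : ZMod f} {c j : ℕ} (h : (j : ZMod f) ≠ s) : rr p f k s c j = 0 := by
  simp [rr, cntd_succ, h]

lemma rr_le (s : ZMod f) (c j : ℕ) : rr p f k s c j ≤ kd p k j := by
  unfold rr
  rw [cntd_succ]
  split_ifs <;> omega

lemma rr_mono (s : ZMod f) {c c' : ℕ} (h : c ≤ c') (j : ℕ) : rr p f k s c j ≤ rr p f k s c' j := by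
  unfold rr
  have := cntd_mono (p := p) (k := k) s (Nat.le_succ j)
  simp only [Nat.succ_eq_add_one] at this
  omega

lemma sum_rr (s : ZMod f) (c n : ℕ) :
    ∑ j ∈ Finset.range n, rr p f k s c j = min c (cntd p f k s n) := by
  induction n with
  | zero => simp [cntd]
  | succ n ih =>
    rw [Finset.sum_range_succ, ih, rr]
    have := cntd_mono (p := p) (k := k) s (Nat.le_succ n)
    simp only [Nat.succ_eq_add_one] at this
    omega

lemma g_min (hp : 2 ≤ p) (s : ZMod f) (c n : ℕ) :
    (sys p f k hp).g s (min c (cntd p f k s n)) =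
      ∑ j ∈ Finset.range n, rr p f k s c j * p ^ j := by
  induction n with
  | zero => simp [cntd, ItemSystem.g_zero]
  | succ n ih =>
    rw [Finset.sum_range_succ, ← ih]
    have hm := cntd_mono (p := p) (k := k) s (Nat.le_succ n)
    simp only [Nat.succ_eq_add_one] at hm
    have h1 : min c (cntd p f k s (n + 1)) = min c (cntd p f k s n) + rr p f k s c n := by
      unfold rr; omega
    rw [h1, ItemSystem.g_add]
    congr 1
    rw [Finset.sum_congr rfl (g := fun _ => p ^ n)]
    · simp
    · intro x hx
      have hx' := Finset.mem_range.1 hx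
      have h2 : (sys p f k hp).e s (min c (cntd p f k s n) + x) = n := by
        apply epos_eq hp s
        · unfold rr at hx'; omega
        · unfold rr at hx'; omega
      rw [h2]; rfl

lemma G_eq (hp : 2 ≤ p) {m : ZMod f → ℤ} (hm : (sys p f k hp).Feas m) :
    (sys p f k hp).G m = ∑ j ∈ Finset.range k,
      rr p f k j ((sys p f k hp).cnt m j).toNat j * p ^ j := by
  unfold ItemSystem.G
  have h1 : ∀ s, (sys p f k hp).g s ((sys p f k hp).cnt m s).toNat =
      ∑ j ∈ Finset.range k, rr p f k s ((sys p f k hp).cnt m s).toNat j * p ^ j := by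
    intro s
    rw [← g_min hp, min_eq_left]
    rw [cap_eq]
    have := (hm s).2
    change _ ≤ ((cN p f k k s : ℕ) : ℤ) at this
    omega
  rw [Finset.sum_congr rfl fun s _ => h1 s, Finset.sum_comm]
  apply Finset.sum_congr rfl
  intro j _
  rw [Finset.sum_eq_single (j : ZMod f)]
  · intro s _ hs
    rw [rr_zero (Ne.symm hs), zero_mul]
  · simp

/-- The value of a feasible vector, as a number, has the numbers of selected items as digits. -/
lemma dg_G (hp : 2 ≤ p) {m : ZMod f → ℤ} (hm : (sys p f k hp).Feas m) (j : ℕ) :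
    dg p ((sys p f k hp).G m) j =
      if j < k then rr p f k j ((sys p f k hp).cnt m j).toNat j else 0 := by
  rw [G_eq hp hm]
  apply dg_sum hp k (fun j => rr p f k j ((sys p f k hp).cnt m j).toNat j)
  intro i
  have := rr_le (p := p) (k := k) (i : ZMod f) ((sys p f k hp).cnt m i).toNat i
  have := kd_le (k := k) hp i
  omega

lemma dLe_G (hp : 2 ≤ p) {m m' : ZMod f → ℤ} (hm : (sys p f k hp).Feas m)
    (hm' : (sys p f k hp).Feas m') (h : ∀ s, (sys p f k hp).cnt m' s ≤ (sys p f k hp).cnt m s) :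
    dLe p ((sys p f k hp).G m') ((sys p f k hp).G m) := by
  intro j
  rw [dg_G hp hm, dg_G hp hm']
  split_ifs
  · exact rr_mono _ (Int.toNat_le_toNat (h _)) _
  · exact le_rfl

lemma dLe_G_k (hp : 2 ≤ p) {m : ZMod f → ℤ} (hm : (sys p f k hp).Feas m) :
    dLe p ((sys p f k hp).G m) k := by
  intro j
  rw [dg_G hp hm]
  split_ifs with h
  · have := rr_le (p := p) (k := k) (j : ZMod f) ((sys p f k hp).cnt m j).toNat j
    rwa [kd, if_pos h] at this
  · positivity

lemma cN_G (hp : 2 ≤ p) {m : ZMod f → ℤ} (hm : (sys p f k hp).Feas m) (s : ZMod f) :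
    (cN p f k ((sys p f k hp).G m) s : ℤ) = (sys p f k hp).cnt m s := by
  have h1 : cN p f k ((sys p f k hp).G m) s =
      ∑ j ∈ Finset.range k, rr p f k s ((sys p f k hp).cnt m s).toNat j := by
    apply Finset.sum_congr rfl
    intro j hj
    rw [dg_G hp hm, if_pos (Finset.mem_range.1 hj)]
    split_ifs with h
    · rw [h]
    · rw [rr_zero h]
  rw [h1, sum_rr, cap_eq]
  have := hm s
  change _ ∧ _ ≤ ((cN p f k k s : ℕ) : ℤ) at this
  omega

lemma US_G (hp : 2 ≤ p) {m : ZMod f → ℤ} (hm : (sys p f k hp).Feas m) (s : ZMod f) :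
    (US p f k ((sys p f k hp).G m) s : ℤ) = (sys p f k hp).W m s := by
  have h1 : ∀ s, (p : ℤ) * US p f k ((sys p f k hp).G m) s =
      ((p : ℤ) ^ f - 1) * (sys p f k hp).cnt m s + US p f k ((sys p f k hp).G m) (s - 1) := by
    intro s
    rw [← cN_G hp hm]
    have := p_mul_US (k := k) hp ((sys p f k hp).G m) s
    have hpos : 1 ≤ p ^ f := Nat.one_le_pow _ _ (by omega)
    zify [hpos] at this
    exact this
  have h2 : ∀ s, (p : ℤ) * (sys p f k hp).W m s =
      ((p : ℤ) ^ f - 1) * (sys p f k hp).cnt m s + (sys p f k hp).W m (s - 1) := by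
    intro s
    have := (sys p f k hp).p_mul_W m s
    simpa [ItemSystem.q, sys] using this
  have a := (sys p f k hp).nonpos_of_mul_le
    (fun s => (US p f k ((sys p f k hp).G m) s : ℤ) - (sys p f k hp).W m s) (by
      intro s
      have := h1 s; have := h2 s
      change (p : ℤ) * _ ≤ _
      linarith) s
  have b := (sys p f k hp).nonpos_of_mul_le
    (fun s => (sys p f k hp).W m s - (US p f k ((sys p f k hp).G m) s : ℤ)) (by
      intro s
      have := h1 s; have := h2 s
      change (p : ℤ) * _ ≤ _
      linarith) s
  linarith

lemma lt_pow_self' (hp : 2 ≤ p) : k < p ^ k := Nat.lt_pow_self (by omega)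

lemma G_modEq (hp : 2 ≤ p) {m : ZMod f → ℤ} (hm : (sys p f k hp).Feas m) :
    (sys p f k hp).G m ≡ k [MOD p ^ f - 1] := by
  have hpos : 1 ≤ p ^ f := Nat.one_le_pow _ _ (by omega)
  rw [← Int.natCast_modEq_iff]
  push_cast [hpos]
  have h1 := US_mod (f := f) ((dLe_G_k hp hm).lt_pow hp) (-1)
  have h2 := US_mod (f := f) (lt_pow_self' (k := k) hp) (-1)
  simp only [neg_neg, sub_self, ZMod.val_zero, pow_zero, mul_one] at h1 h2
  refine h1.symm.trans (Int.ModEq.trans ?_ h2)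
  rw [US_G hp hm]
  apply Int.ModEq.symm
  rw [Int.modEq_iff_dvd]
  refine ⟨m (-1), ?_⟩
  simp [ItemSystem.W, sys, ItemSystem.q]

/-- The vector encoding `R`. The division is exact when `R` is dominated by `k` and congruent to it
modulo `q - 1` (`vec_mul`). -/
noncomputable def vec (p f k R : ℕ) (s : ZMod f) : ℤ :=
  ((US p f k R s : ℤ) - US p f k k s) / ((p : ℤ) ^ f - 1)

lemma q1_pos (hp : 2 ≤ p) : (0 : ℤ) < (p : ℤ) ^ f - 1 := by
  have : 2 ≤ p ^ f := le_trans hp (Nat.le_self_pow (NeZero.ne f) _)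
  have : (2 : ℤ) ≤ (p : ℤ) ^ f := by exact_mod_cast this
  linarith

lemma vec_mul (hp : 2 ≤ p) {R : ℕ} (h : dLe p R k) (hm : R ≡ k [MOD p ^ f - 1]) (s : ZMod f) :
    ((p : ℤ) ^ f - 1) * vec p f k R s = (US p f k R s : ℤ) - US p f k k s := by
  apply Int.mul_ediv_cancel'
  have hpos : 1 ≤ p ^ f := Nat.one_le_pow _ _ (by omega)
  rw [← Int.natCast_modEq_iff] at hm
  push_cast [hpos] at hm
  have h1 := US_mod (f := f) (h.lt_pow hp) s
  have h2 := US_mod (f := f) (lt_pow_self' (k := k) hp) s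
  exact (Int.modEq_iff_dvd.1 ((h1.trans (hm.mul_right _)).trans h2.symm).symm)

lemma cnt_vec (hp : 2 ≤ p) {R : ℕ} (h : dLe p R k) (hm : R ≡ k [MOD p ^ f - 1]) (s : ZMod f) :
    (sys p f k hp).cnt (vec p f k R) s = cN p f k R s := by
  have h1 : ∀ s, (sys p f k hp).W (vec p f k R) s = US p f k R s := by
    intro s
    have := vec_mul (f := f) hp h hm s
    simp only [ItemSystem.W, ItemSystem.q, sys]
    push_cast
    linarith
  have h2 := (sys p f k hp).p_mul_W (vec p f k R) s
  rw [h1, h1] at h2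
  have h3 := p_mul_US (k := k) hp R s
  have hpos : 1 ≤ p ^ f := Nat.one_le_pow _ _ (by omega)
  zify [hpos] at h3
  have h4 : ((p : ℤ) ^ f - 1) * (sys p f k hp).cnt (vec p f k R) s =
      ((p : ℤ) ^ f - 1) * cN p f k R s := by
    have h5 : (((sys p f k hp).q : ℕ) : ℤ) = (p : ℤ) ^ f := by simp [ItemSystem.q, sys]
    have h6 : (sys p f k hp).p = p := rfl
    rw [h5, h6] at h2
    linarith
  exact mul_left_cancel₀ (q1_pos hp).ne' h4

lemma cN_le {R R' : ℕ} (h : dLe p R R') (s : ZMod f) : cN p f k R s ≤ cN p f k R' s := by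
  apply Finset.sum_le_sum
  intro j _
  split_ifs
  · exact h j
  · exact le_rfl

lemma feas_vec (hp : 2 ≤ p) {R : ℕ} (h : dLe p R k) (hm : R ≡ k [MOD p ^ f - 1]) :
    (sys p f k hp).Feas (vec p f k R) := by
  intro s
  rw [cnt_vec hp h hm]
  refine ⟨by positivity, ?_⟩
  change ((cN p f k R s : ℕ) : ℤ) ≤ ((cN p f k k s : ℕ) : ℤ)
  exact_mod_cast cN_le h s

lemma eq_of_cN_eq (hp : 2 ≤ p) {R R' : ℕ} (h : dLe p R R') (hR' : dLe p R' k)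
    (he : ∀ s, cN p f k R s = cN p f k R' s) : R = R' := by
  rw [← sum_dg_eq ((h.trans hR').lt_pow hp), ← sum_dg_eq (hR'.lt_pow hp)]
  apply Finset.sum_congr rfl
  intro j hj
  congr 1
  have h1 := (Finset.sum_eq_sum_iff_of_le (s := Finset.range k)
    (f := fun i => if (i : ZMod f) = (j : ZMod f) then dg p R i else 0)
    (g := fun i => if (i : ZMod f) = (j : ZMod f) then dg p R' i else 0) (by
      intro i _
      split_ifs
      · exact h i
      · exact le_rfl)).1 (he j) j hj
  simpa using h1

lemma vec_le_sub_one (hp : 2 ≤ p) {R R' : ℕ} (h : dLe p R R') (hlt : R < R') (hR' : dLe p R' k)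
    (hm : R ≡ k [MOD p ^ f - 1]) (hm' : R' ≡ k [MOD p ^ f - 1]) :
    vec p f k R ≤ vec p f k R' - 1 := by
  apply (sys p f k hp).le_sub_one_of_cnt_le
  · intro s
    rw [cnt_vec hp (h.trans hR') hm, cnt_vec hp hR' hm']
    exact_mod_cast cN_le h s
  · intro heq
    apply hlt.ne
    apply eq_of_cN_eq (f := f) hp h hR'
    intro s
    have h1 := cnt_vec hp (h.trans hR') hm s
    rw [heq, cnt_vec hp hR' hm'] at h1
    exact_mod_cast h1.symm

lemma vec_le_zero (hp : 2 ≤ p) {R : ℕ} (h : dLe p R k) (hm : R ≡ k [MOD p ^ f - 1]) :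
    vec p f k R ≤ 0 := by
  apply (sys p f k hp).le_of_cnt_le
  intro s
  have := ((feas_vec hp h hm) s).2
  refine this.trans (by simp [ItemSystem.cnt])

/-- The number formed by the cheapest items with the item counts of `R` is at most `R`. -/
lemma G_vec_le (hp : 2 ≤ p) {R : ℕ} (h : dLe p R k) (hm : R ≡ k [MOD p ^ f - 1]) :
    (sys p f k hp).G (vec p f k R) ≤ R := by
  have key : ∀ (s : ZMod f) (n : ℕ), n ≤ k →
      (∑ j ∈ Finset.range n, if (j : ZMod f) = s then dg p R j else 0) ≤ cntd p f k s n ∧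
      (sys p f k hp).g s (∑ j ∈ Finset.range n, if (j : ZMod f) = s then dg p R j else 0) ≤
        ∑ j ∈ Finset.range n, if (j : ZMod f) = s then dg p R j * p ^ j else 0 := by
    intro s n
    induction n with
    | zero => simp [ItemSystem.g_zero]
    | succ n ih =>
      intro hn
      obtain ⟨h1, h2⟩ := ih (by omega)
      rw [Finset.sum_range_succ, Finset.sum_range_succ, cntd_succ]
      split_ifs with hs
      · have h3 : dg p R n ≤ kd p k n := by
          rw [kd, if_pos (by omega)]; exact h n
        refine ⟨by omega, ?_⟩
        rw [ItemSystem.g_add]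
        apply Nat.add_le_add h2
        have : ∀ x ∈ Finset.range (dg p R n), (sys p f k hp).p ^ (sys p f k hp).e s
            ((∑ j ∈ Finset.range n, if (j : ZMod f) = s then dg p R j else 0) + x) ≤ p ^ n := by
          intro x hx
          have hx' := Finset.mem_range.1 hx
          apply Nat.pow_le_pow_right (show 0 < p by omega)
          have h5 := (le_epos (k := k) hp s ((∑ j ∈ Finset.range n,
            if (j : ZMod f) = s then dg p R j else 0) + x) (n + 1)).not.2 (by
              rw [cntd_succ, if_pos hs]; omega)
          change epos p f k hp s _ ≤ n
          omega
        simpa using Finset.sum_le_card_nsmul _ _ _ this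
      · simpa using ⟨h1, h2⟩
  conv_rhs => rw [← sum_dg_eq (h.lt_pow hp)]
  have hR : ∑ j ∈ Finset.range k, dg p R j * p ^ j =
      ∑ s : ZMod f, ∑ j ∈ Finset.range k, if (j : ZMod f) = s then dg p R j * p ^ j else 0 := by
    rw [Finset.sum_comm]
    simp
  rw [hR]
  apply Finset.sum_le_sum
  intro s _
  have := (key s k le_rfl).2
  rw [cnt_vec hp h hm]
  exact this

end

/-! ### Chains of numbers and the invariant `L_k` -/

section
/-- Chains `k > R_1 > R_2 > …` of numbers congruent modulo `q - 1`, each digitwise dominated by the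
preceding one. They index the monomials of `sP`. -/
def SCh (p f : ℕ) : ℕ → List ℕ → Prop
  | _, [] => True
  | k, R :: l => R < k ∧ dLe p R k ∧ R ≡ k [MOD p ^ f - 1] ∧ SCh p f R l

/-- As `SCh`, but the first number may equal `k`. These chains index the monomials of `rP`. -/
def WCh (p f : ℕ) : ℕ → List ℕ → Prop
  | _, [] => True
  | k, R :: l => dLe p R k ∧ R ≡ k [MOD p ^ f - 1] ∧ SCh p f R l

variable {p f k : ℕ} [NeZero f]

lemma SCh.mem : ∀ {l : List ℕ} {R0 : ℕ}, dLe p R0 k → R0 ≡ k [MOD p ^ f - 1] → SCh p f R0 l →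
    ∀ R ∈ l, dLe p R k ∧ R ≡ k [MOD p ^ f - 1]
  | [], _, _, _, _ => by simp
  | R1 :: l, R0, h, hm, ⟨_, h2, h3, h4⟩ => by
    intro R hR
    have a := h2.trans h
    have b := h3.trans hm
    rcases List.mem_cons.1 hR with rfl | hR
    · exact ⟨a, b⟩
    · exact SCh.mem a b h4 R hR

lemma WCh.mem {l : List ℕ} (h : WCh p f k l) : ∀ R ∈ l, dLe p R k ∧ R ≡ k [MOD p ^ f - 1] := by
  cases l with
  | nil => simp
  | cons R1 l =>
    intro R hR
    rcases List.mem_cons.1 hR with rfl | hR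
    · exact ⟨h.1, h.2.1⟩
    · exact SCh.mem h.1 h.2.1 h.2.2 R hR

lemma SCh.nch (hp : 2 ≤ p) : ∀ {l : List ℕ} {R0 : ℕ}, dLe p R0 k → R0 ≡ k [MOD p ^ f - 1] →
    SCh p f R0 l → (sys p f k hp).NCh (vec p f k R0 - 1) (l.map (vec p f k))
  | [], _, _, _, _ => trivial
  | R1 :: l, R0, h, hm, ⟨h1, h2, h3, h4⟩ => by
    have a := h2.trans h
    have b := h3.trans hm
    exact ⟨vec_le_sub_one hp h2 h1 h b hm, feas_vec hp a b, SCh.nch hp a b h4⟩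

lemma WCh.nch (hp : 2 ≤ p) {l : List ℕ} (h : WCh p f k l) :
    (sys p f k hp).NCh 0 (l.map (vec p f k)) := by
  cases l with
  | nil => trivial
  | cons R l => exact ⟨vec_le_zero hp h.1 h.2.1, feas_vec hp h.1 h.2.1, h.2.2.nch hp h.1 h.2.1⟩

lemma WCh.bound (hp : 2 ≤ p) {l : List ℕ} {d : ℕ} (h : WCh p f k l) (hl : l.length = d + 1)
    (s : ZMod f) : ((p : ℤ) ^ f - 1) * d ≤ US p f k k s := by
  cases l with
  | nil => simp at hl
  | cons R l =>
    obtain ⟨h1, h2, h3⟩ := h.nch hp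
    have := (ItemSystem.NCh.above _ h2 h3).mono _ le_rfl h1 s
    have hl' : l.length = d := by simpa using hl
    simpa [ItemSystem.q, sys, hl'] using this

/-- The values of an optimal chain of vectors form a chain of numbers. -/
lemma opt_sch (hp : 2 ≤ p) : ∀ {l : List (ZMod f → ℤ)} {M B : ZMod f → ℤ},
    (sys p f k hp).Opt M (B :: l) → SCh p f ((sys p f k hp).G B) (l.map (sys p f k hp).G)
  | [], _, _, _ => trivial
  | B' :: l, M, B, hO => by
    obtain ⟨hBM, hB, hB'B, hB', hl⟩ := hO.1
    have hd := dLe_G hp hB hB' (ItemSystem.Opt.nested _ hO)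
    refine ⟨lt_of_le_of_ne (hd.le hp) ?_, hd, (G_modEq hp hB').trans (G_modEq hp hB).symm,
      opt_sch hp (ItemSystem.Opt.tail _ hO)⟩
    intro he
    have := ItemSystem.G_inj _ hB' hB he
    have h1 := hB'B 0
    rw [this] at h1
    simp at h1

lemma list_map_eq (φ : ℕ → ℕ) : ∀ l : List ℕ, (∀ R ∈ l, φ R ≤ R) → l.sum ≤ (l.map φ).sum →
    l.map φ = l
  | [], _, _ => rfl
  | R :: l, h, hs => by
    have h1 := h R (by simp)
    have h2 : (l.map φ).sum ≤ l.sum := by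
      have := List.sum_le_sum (l := l) (f := φ) (g := id) (fun i hi => h i (by simp [hi]))
      simpa using this
    simp only [List.map_cons, List.sum_cons] at hs
    rw [List.map_cons, list_map_eq φ l (fun i hi => h i (by simp [hi])) (by omega),
      show φ R = R by omega]

lemma list_map_sum_le (φ : ℕ → ℕ) (l : List ℕ) (h : ∀ R ∈ l, φ R ≤ R) :
    (l.map φ).sum ≤ l.sum := by
  have := List.sum_le_sum (l := l) (f := φ) (g := id) h
  simpa using this

/-- If the digit sums allow chains of length `d + 1`, exactly one of them has least sum: it is the
image of the unique optimal chain of vectors. -/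
lemma exists_min_chain (hp : 2 ≤ p) {d : ℕ}
    (h : ∀ s : ZMod f, ((p : ℤ) ^ f - 1) * d ≤ US p f k k s) :
    ∃ l0, WCh p f k l0 ∧ l0.length = d + 1 ∧
      ∀ l, WCh p f k l → l.length = d + 1 → l ≠ l0 → l0.sum < l.sum := by
  obtain ⟨L, hO, hL⟩ := (sys p f k hp).exists_opt d (by
    intro s
    have := h s
    simpa [ItemSystem.q, sys] using this)
  refine ⟨L.map (sys p f k hp).G, ?_, by simpa using hL, ?_⟩
  · cases L with
    | nil => trivial
    | cons B L =>
      exact ⟨dLe_G_k hp hO.1.2.1, G_modEq hp hO.1.2.1, opt_sch hp hO⟩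
  · intro l hl hlen hne
    by_contra hc
    push Not at hc
    have hmem : ∀ R ∈ l, ((sys p f k hp).G ∘ vec p f k) R ≤ R :=
      fun R hR => G_vec_le hp (hl.mem R hR).1 (hl.mem R hR).2
    have h1 : (l.map ((sys p f k hp).G ∘ vec p f k)).sum = (sys p f k hp).cost (l.map (vec p f k)) := by
      simp [ItemSystem.cost]
    have h2 := list_map_sum_le _ l hmem
    have h3 := hO.2 (l.map (vec p f k)) (hl.nch hp) (by simp [hlen, hL])
    have h4 : (L.map (sys p f k hp).G).sum = (sys p f k hp).cost L := rfl
    have hO' : (sys p f k hp).Opt 0 (l.map (vec p f k)) := by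
      refine ⟨hl.nch hp, fun l' a b => ?_⟩
      have := hO.2 l' a (by rw [b]; simp [hlen, hL])
      omega
    have h5 := ItemSystem.Opt.unique _ hO' hO (by simp [hlen, hL])
    have h6 := list_map_eq _ l hmem (by omega)
    apply hne
    rw [← h6, ← h5]
    simp

lemma dg_add (n i j : ℕ) : dg p n (i + j) = dg p (n / p ^ i) j := by
  unfold dg; rw [pow_add, Nat.div_div_eq_div_mul]

/-- A base-`q` digit is made of `f` consecutive base-`p` digits. -/
lemma digits_sum (hp : 2 ≤ p) : ∀ (a n : ℕ), n < (p ^ f) ^ a →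
    (Nat.digits (p ^ f) n).sum = ∑ j ∈ Finset.range (f * a), dg p n j * p ^ (j % f)
  | 0, n, h => by
    have : n = 0 := by simpa using h
    simp [this]
  | a + 1, n, h => by
    have hq : 1 < p ^ f := Nat.one_lt_pow (NeZero.ne f) (by omega)
    have h1 : n / p ^ f < (p ^ f) ^ a := by
      rw [Nat.div_lt_iff_lt_mul (by omega), ← pow_succ]; exact h
    have ih := digits_sum hp a (n / p ^ f) h1
    have h2 : (Nat.digits (p ^ f) n).sum = n % p ^ f + (Nat.digits (p ^ f) (n / p ^ f)).sum := by
      rcases Nat.eq_zero_or_pos n with rfl | h0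
      · simp
      · rw [Nat.digits_def' hq h0, List.sum_cons]
    rw [h2, ih, mul_add, mul_one, add_comm (f * a), Finset.sum_range_add, ← sum_dg n f]
    congr 1
    · apply Finset.sum_congr rfl
      intro j hj
      rw [Nat.mod_eq_of_lt (Finset.mem_range.1 hj)]
    · apply Finset.sum_congr rfl
      intro j _
      rw [dg_add, Nat.add_mod_left]

lemma digits_sum_eq_US (hp : 2 ≤ p) (s : ZMod f) :
    (Nat.digits (p ^ f) (k * p ^ (-s - 1).val)).sum = US p f k k s := by
  set i := (-s - 1).val with hi
  have hif : i < f := ZMod.val_lt _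
  have hk := lt_pow_self' (k := k) hp
  have hf := NeZero.pos f
  have h1 : k * p ^ i < (p ^ f) ^ (k + 1) := by
    rw [← pow_mul, mul_add, mul_one, pow_add]
    calc k * p ^ i < p ^ k * p ^ i := Nat.mul_lt_mul_of_pos_right hk (by positivity)
      _ ≤ p ^ (f * k) * p ^ f := Nat.mul_le_mul
        (Nat.pow_le_pow_right (by omega) (Nat.le_mul_of_pos_left _ hf))
        (Nat.pow_le_pow_right (by omega) hif.le)
  rw [digits_sum hp _ _ h1]
  have h2 : f * (k + 1) = i + (k + (f * (k + 1) - i - k)) := by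
    have : k ≤ f * k := Nat.le_mul_of_pos_left _ hf
    have : f * (k + 1) = f * k + f := by ring
    omega
  rw [h2, Finset.sum_range_add, Finset.sum_range_add (n := k)]
  have h3 : ∑ x ∈ Finset.range i, dg p (k * p ^ i) x * p ^ (x % f) = 0 := by
    apply Finset.sum_eq_zero
    intro x hx
    have hx' := Finset.mem_range.1 hx
    have : dg p (k * p ^ i) x = 0 := by
      unfold dg
      obtain ⟨y, hy⟩ : ∃ y, i = x + (y + 1) := ⟨i - x - 1, by omega⟩
      rw [hy, pow_add, mul_left_comm, Nat.mul_div_cancel_left _ (by positivity), pow_succ,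
        ← mul_assoc, Nat.mul_mod_left]
    rw [this, zero_mul]
  have h4 : ∀ x, dg p (k * p ^ i) (i + x) = dg p k x := by
    intro x
    rw [dg_add, Nat.mul_div_cancel _ (by positivity)]
  have h5 : ∑ x ∈ Finset.range (f * (k + 1) - i - k),
      dg p (k * p ^ i) (i + (k + x)) * p ^ ((i + (k + x)) % f) = 0 := by
    apply Finset.sum_eq_zero
    intro x _
    rw [h4, dg, Nat.div_eq_of_lt (lt_of_lt_of_le hk (Nat.pow_le_pow_right (by omega) (by omega)))]
    simp
  rw [h3, h5, zero_add, add_zero]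
  apply Finset.sum_congr rfl
  intro j _
  rw [h4]
  congr 2
  rw [← ZMod.val_natCast]
  congr 1
  rw [Nat.cast_add, hi, ZMod.natCast_zmod_val]
  ring

lemma Lval_lt_iff (hp : 2 ≤ p) (d : ℕ) : Lval (p ^ f) p f k < d ↔
    ¬ ∀ s : ZMod f, ((p : ℤ) ^ f - 1) * d ≤ US p f k k s := by
  have hq := q1_pos (f := f) hp
  have hqQ : (0 : ℚ) < ((p ^ f : ℕ) : ℚ) - 1 := by
    have : (0 : ℚ) < (((p : ℤ) ^ f - 1 : ℤ) : ℚ) := by exact_mod_cast hq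
    push_cast at this ⊢; exact this
  have hcast : ∀ n : ℕ, (n : ℚ) / (((p ^ f : ℕ) : ℚ) - 1) < d ↔ (n : ℤ) < ((p : ℤ) ^ f - 1) * d := by
    intro n
    rw [div_lt_iff₀ hqQ, mul_comm, ← Int.cast_lt (R := ℚ)]
    push_cast
    rfl
  refine Iff.trans (Finset.inf'_lt_iff _) ?_
  push Not
  have hf := NeZero.pos f
  constructor
  · rintro ⟨i, hi, h⟩
    have hif : i < f := by have := (Finset.mem_Icc.1 hi).2; omega
    refine ⟨-(i : ZMod f) - 1, ?_⟩
    rw [← digits_sum_eq_US hp, ← hcast]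
    have : (-(-(i : ZMod f) - 1) - 1).val = i := by
      rw [show -(-(i : ZMod f) - 1) - 1 = i by ring, ZMod.val_natCast, Nat.mod_eq_of_lt hif]
    rw [this]
    exact h
  · rintro ⟨s, h⟩
    refine ⟨(-s - 1).val, ?_, ?_⟩
    · have := ZMod.val_lt (-s - 1)
      simp; omega
    · rw [hcast, digits_sum_eq_US hp]
      exact h

end

/-! ### Power sums as polynomials in `v` -/

section
variable {F : Type} [Field F] [Fintype F]

/-- The polynomial whose value at `v` is the unrestricted power sum `S_d(-k)`. -/
noncomputable def sP (F : Type) [Field F] [Fintype F] : ℕ → ℕ → F[X]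
  | 0, _ => 1
  | d + 1, k => -∑ R ∈ Finset.range k,
      if Fintype.card F - 1 ∣ k - R then (k.choose R : F[X]) * X ^ R * sP F d R else 0

/-- The polynomial whose value at `v` is the restricted power sum `S̃_d(-k)`. -/
noncomputable def rP (F : Type) [Field F] [Fintype F] : ℕ → ℕ → F[X]
  | 0, _ => 1
  | d + 1, k => -∑ R ∈ Finset.range (k + 1),
      if Fintype.card F - 1 ∣ k - R then (k.choose R : F[X]) * X ^ R * sP F d R else 0

lemma lower_degree_lt (d : ℕ) (c : Fin d → F) :
    (∑ i : Fin d, C (c i) * X ^ (i : ℕ)).degree < (d : WithBot ℕ) := degree_sum_fin_lt c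

lemma monicPoly_monic (d : ℕ) (c : Fin d → F) : (monicPoly F d c).Monic :=
  monic_X_pow_add (lower_degree_lt d c)

lemma monicPoly_natDegree (d : ℕ) (c : Fin d → F) : (monicPoly F d c).natDegree = d := by
  unfold monicPoly
  rw [natDegree_add_eq_left_of_degree_lt, natDegree_X_pow]
  rw [degree_X_pow]; exact lower_degree_lt d c

lemma monicPoly_coeff (d : ℕ) (c : Fin d → F) (i : Fin d) : (monicPoly F d c).coeff i = c i := by
  unfold monicPoly
  rw [coeff_add, coeff_X_pow, if_neg i.2.ne, zero_add, finsetSum_coeff]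
  simp only [coeff_C_mul, coeff_X_pow]
  rw [Finset.sum_eq_single i]
  · simp
  · intro b _ hb
    rw [if_neg (fun h => hb (Fin.ext h.symm)), mul_zero]
  · simp

lemma monicPoly_injective (d : ℕ) : Function.Injective (monicPoly F d) := by
  intro c c' h
  funext i
  rw [← monicPoly_coeff d c i, h, monicPoly_coeff]

/-- The finite set of monic polynomials of degree `d`. -/
noncomputable def monics (F : Type) [Field F] [Fintype F] (d : ℕ) : Finset F[X] :=
  Finset.univ.image (monicPoly F d)

lemma mem_monics {d : ℕ} {a : F[X]} : a ∈ monics F d ↔ a.Monic ∧ a.natDegree = d := by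
  unfold monics
  rw [Finset.mem_image]
  constructor
  · rintro ⟨c, _, rfl⟩
    exact ⟨monicPoly_monic d c, monicPoly_natDegree d c⟩
  · rintro ⟨h, rfl⟩
    refine ⟨fun i => a.coeff i, Finset.mem_univ _, ?_⟩
    conv_rhs => rw [h.as_sum]
    rw [monicPoly, Finset.sum_range (fun i => C (a.coeff i) * X ^ i)]

lemma sum_monicPoly (d : ℕ) (g : F[X] → F[X]) :
    ∑ c : Fin d → F, g (monicPoly F d c) = ∑ a ∈ monics F d, g a :=
  (Finset.sum_image (f := g) (monicPoly_injective d).injOn).symm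

variable {v : F[X]}

/-- Division with remainder by the monic linear polynomial `v`. -/
lemma sum_monics_succ (hv : v.Monic) (hdeg : v.natDegree = 1) (d : ℕ) (g : F[X] → F[X]) :
    ∑ a ∈ monics F (d + 1), g a = ∑ b ∈ monics F d, ∑ e : F, g (v * b + C e) := by
  have hvd : v.degree = 1 := by rw [degree_eq_natDegree hv.ne_zero, hdeg]; rfl
  have hC : ∀ e : F, (C e).degree < v.degree := fun e =>
    lt_of_le_of_lt degree_C_le (by rw [hvd]; exact zero_lt_one)
  rw [← Finset.sum_product']
  symm
  refine Finset.sum_nbij' (fun x => v * x.1 + C x.2) (fun a => (a /ₘ v, (a %ₘ v).coeff 0))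
    ?_ ?_ ?_ ?_ ?_
  · rintro ⟨b, e⟩ h
    obtain ⟨hb, hbd⟩ := mem_monics.1 (Finset.mem_product.1 h).1
    have h1 : (C e).degree < (v * b).degree := by
      refine (hC e).trans_le ?_
      rw [hb.degree_mul]
      exact le_add_of_nonneg_right (zero_le_degree_iff.2 hb.ne_zero)
    refine mem_monics.2 ⟨(hv.mul hb).add_of_left h1, ?_⟩
    rw [natDegree_add_eq_left_of_degree_lt h1, hv.natDegree_mul hb, hdeg, hbd, add_comm]
  · intro a ha
    obtain ⟨h, had⟩ := mem_monics.1 ha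
    refine Finset.mem_product.2 ⟨mem_monics.2 ⟨?_, ?_⟩, Finset.mem_univ _⟩
    · rw [Monic, leadingCoeff_divByMonic_of_monic hv, h]
      rw [degree_eq_natDegree hv.ne_zero, degree_eq_natDegree h.ne_zero, hdeg, had]
      exact_mod_cast Nat.le_add_left 1 d
    · rw [natDegree_divByMonic _ hv, hdeg, had]; rfl
  · rintro ⟨b, e⟩ h
    obtain ⟨h1, h2⟩ := div_modByMonic_unique (f := v * b + C e) b (C e) hv ⟨add_comm _ _, hC e⟩
    ext1
    · exact h1
    · show ((v * b + C e) %ₘ v).coeff 0 = e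
      rw [h2, coeff_C_zero]
  · intro a ha
    have h1 : a %ₘ v = C ((a %ₘ v).coeff 0) := by
      apply eq_C_of_degree_le_zero
      have := degree_modByMonic_lt a hv
      rw [hvd] at this
      exact Order.le_of_lt_succ this
    show v * (a /ₘ v) + C ((a %ₘ v).coeff 0) = a
    rw [← h1, add_comm, modByMonic_add_div]
  · intro _ _; rfl

lemma dvd_add_C (hdeg : v.natDegree = 1) (b : F[X]) (e : F) :
    v ∣ v * b + C e ↔ e = 0 := by
  rw [dvd_add_right (dvd_mul_right _ _)]
  constructor
  · intro h
    by_contra he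
    have := natDegree_le_of_dvd h (C_ne_zero.2 he)
    rw [hdeg, natDegree_C] at this
    omega
  · rintro rfl; simp

lemma sum_pow_ne (m : ℕ) : (∑ e : F, if e = 0 then 0 else e ^ m) =
    if Fintype.card F - 1 ∣ m then (-1 : F) else 0 := by
  rw [← FiniteField.sum_pow_units F m]
  let φ : Fˣ ↪ F := ⟨fun x => x, Units.val_injective⟩
  have h : Finset.univ.map φ = Finset.univ.filter (fun x : F => x ≠ 0) := by
    ext x
    simp only [Finset.mem_map, Finset.mem_univ, true_and, Finset.mem_filter]
    exact isUnit_iff_ne_zero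
  calc (∑ e : F, if e = 0 then 0 else e ^ m) = ∑ e : F, if e ≠ 0 then e ^ m else 0 := by
        apply Finset.sum_congr rfl
        intro e _
        by_cases he : e = 0 <;> simp [he]
    _ = ∑ e ∈ Finset.univ.map φ, e ^ m := by rw [h, Finset.sum_filter]
    _ = _ := by rw [Finset.sum_map]; rfl

lemma sum_pow_all (m : ℕ) : (∑ e : F, e ^ m) =
    if m ≠ 0 ∧ Fintype.card F - 1 ∣ m then (-1 : F) else 0 := by
  by_cases hm : m = 0
  · subst hm; simp
  · rw [show (∑ e : F, e ^ m) = ∑ e : F, if e = 0 then 0 else e ^ m by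
      apply Finset.sum_congr rfl
      intro e _
      by_cases he : e = 0 <;> simp [he, hm], sum_pow_ne]
    simp [hm]

lemma powerSum_zero (k : ℕ) : powerSum F 0 k = 1 := by
  simp [powerSum, monicPoly]

lemma powerSum_succ (hv : v.Monic) (hdeg : v.natDegree = 1) (d k : ℕ) :
    powerSum F (d + 1) k = -∑ R ∈ Finset.range k,
      if Fintype.card F - 1 ∣ k - R then (k.choose R : F[X]) * v ^ R * powerSum F d R else 0 := by
  have h1 : ∀ b : F[X], ∑ e : F, (v * b + C e) ^ k = -∑ R ∈ Finset.range k,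
      if Fintype.card F - 1 ∣ k - R then (k.choose R : F[X]) * v ^ R * b ^ R else 0 := by
    intro b
    simp_rw [add_pow]
    rw [Finset.sum_comm, Finset.sum_range_succ, ← Finset.sum_neg_distrib]
    have h0 : ∀ R, ∑ e : F, (v * b) ^ R * C e ^ (k - R) * (k.choose R : F[X]) =
        if k - R ≠ 0 ∧ Fintype.card F - 1 ∣ k - R then
          -((k.choose R : F[X]) * v ^ R * b ^ R) else 0 := by
      intro R
      rw [← Finset.sum_mul, ← Finset.mul_sum]
      simp_rw [← C_pow]
      rw [← map_sum, sum_pow_all]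
      split_ifs
      · rw [C_neg, C_1]; ring
      · simp
    rw [h0 k, if_neg (by simp), add_zero]
    apply Finset.sum_congr rfl
    intro R hR
    have := Finset.mem_range.1 hR
    rw [h0 R]
    by_cases hd : Fintype.card F - 1 ∣ k - R
    · rw [if_pos ⟨by omega, hd⟩, if_pos hd]
    · rw [if_neg (fun h => hd h.2), if_neg hd, neg_zero]
  unfold powerSum
  rw [sum_monicPoly (d + 1) (fun a => a ^ k), sum_monics_succ hv hdeg]
  simp_rw [h1]
  rw [Finset.sum_neg_distrib, Finset.sum_comm]
  congr 1
  apply Finset.sum_congr rfl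
  intro R _
  rw [sum_monicPoly d (fun a => a ^ R)]
  split_ifs
  · rw [Finset.mul_sum]
  · simp

lemma rPowerSum_zero (hdeg : v.natDegree = 1) (k : ℕ) :
    rPowerSum F v 0 k = 1 := by
  have : ¬ v ∣ 1 := by
    intro h
    have := natDegree_le_of_dvd h one_ne_zero
    simp [hdeg] at this
  simp [rPowerSum, monicPoly, this]

lemma rPowerSum_succ (hv : v.Monic) (hdeg : v.natDegree = 1) (d k : ℕ) :
    rPowerSum F v (d + 1) k = -∑ R ∈ Finset.range (k + 1),
      if Fintype.card F - 1 ∣ k - R then (k.choose R : F[X]) * v ^ R * powerSum F d R else 0 := by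
  have h1 : ∀ b : F[X], ∑ e : F, (if v ∣ v * b + C e then 0 else (v * b + C e) ^ k) =
      -∑ R ∈ Finset.range (k + 1),
      if Fintype.card F - 1 ∣ k - R then (k.choose R : F[X]) * v ^ R * b ^ R else 0 := by
    intro b
    simp_rw [dvd_add_C hdeg]
    have h2 : ∀ e : F, (if e = 0 then 0 else (v * b + C e) ^ k) = ∑ R ∈ Finset.range (k + 1),
        (v * b) ^ R * C (if e = 0 then 0 else e ^ (k - R)) * (k.choose R : F[X]) := by
      intro e
      by_cases he : e = 0
      · simp [he]
      · simp only [if_neg he, add_pow, C_pow]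
    simp_rw [h2]
    rw [Finset.sum_comm, ← Finset.sum_neg_distrib]
    apply Finset.sum_congr rfl
    intro R _
    rw [← Finset.sum_mul, ← Finset.mul_sum, ← map_sum, sum_pow_ne]
    split_ifs
    · rw [C_neg, C_1]; ring
    · simp
  unfold rPowerSum powerSum
  rw [sum_monicPoly (d + 1) (fun a => if v ∣ a then 0 else a ^ k), sum_monics_succ hv hdeg]
  simp_rw [h1]
  rw [Finset.sum_neg_distrib, Finset.sum_comm]
  congr 1
  apply Finset.sum_congr rfl
  intro R _
  rw [sum_monicPoly d (fun a => a ^ R)]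
  split_ifs
  · rw [Finset.mul_sum]
  · simp

lemma sum_comp_right (s : Finset ℕ) (g : ℕ → F[X]) :
    (∑ i ∈ s, g i).comp v = ∑ i ∈ s, (g i).comp v :=
  map_sum (compRingHom v) g s

lemma powerSum_eq (hv : v.Monic) (hdeg : v.natDegree = 1) :
    ∀ d k : ℕ, powerSum F d k = (sP F d k).comp v
  | 0, k => by simp [powerSum_zero, sP]
  | d + 1, k => by
    rw [powerSum_succ hv hdeg, sP, neg_comp, sum_comp_right]
    congr 1
    apply Finset.sum_congr rfl
    intro R _
    rw [powerSum_eq hv hdeg d R]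
    split_ifs <;> simp

lemma rPowerSum_eq (hv : v.Monic) (hdeg : v.natDegree = 1) :
    ∀ d k : ℕ, rPowerSum F v d k = (rP F d k).comp v
  | 0, k => by simp [rPowerSum_zero hdeg, rP]
  | d + 1, k => by
    rw [rPowerSum_succ hv hdeg, rP, neg_comp, sum_comp_right]
    congr 1
    apply Finset.sum_congr rfl
    intro R _
    rw [powerSum_eq hv hdeg d R]
    split_ifs <;> simp

lemma sP_eq_zero : ∀ {d k : ℕ}, k < d → sP F d k = 0
  | 0, _, h => by omega
  | d + 1, k, h => by
    rw [sP, Finset.sum_eq_zero, neg_zero]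
    intro R hR
    have := Finset.mem_range.1 hR
    rw [sP_eq_zero (by omega)]
    simp

lemma rP_eq_zero {d k : ℕ} (h : k + 1 < d) : rP F d k = 0 := by
  cases d with
  | zero => omega
  | succ d =>
    rw [rP, Finset.sum_eq_zero, neg_zero]
    intro R hR
    have := Finset.mem_range.1 hR
    rw [sP_eq_zero (by omega)]
    simp

lemma rP_succ_eq (d k : ℕ) : rP F (d + 1) k = sP F (d + 1) k - X ^ k * sP F d k := by
  rw [rP, sP, Finset.sum_range_succ]
  simp
  ring

/-- The sum over all `d` of the polynomials `sP F d k`, which vanish for `d > k`. -/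
noncomputable def zP (F : Type) [Field F] [Fintype F] (k : ℕ) : F[X] :=
  ∑ d ∈ Finset.range (k + 1), sP F d k

lemma zP_eq {k N : ℕ} (h : k < N) : ∑ d ∈ Finset.range N, sP F d k = zP F k := by
  unfold zP
  symm
  apply Finset.sum_subset
  · intro d; simp; omega
  · intro d _ hd
    apply sP_eq_zero
    simpa using hd

lemma zP_rec (k : ℕ) : zP F k = 1 - ∑ R ∈ Finset.range k,
    if Fintype.card F - 1 ∣ k - R then (k.choose R : F[X]) * X ^ R * zP F R else 0 := by
  rw [zP, Finset.sum_range_succ']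
  simp only [sP]
  rw [Finset.sum_neg_distrib, Finset.sum_comm]
  rw [add_comm, ← sub_eq_add_neg]
  congr 1
  apply Finset.sum_congr rfl
  intro R hR
  rw [← zP_eq (Finset.mem_range.1 hR)]
  split_ifs
  · rw [Finset.mul_sum]
  · simp

lemma zP_eq_zero (k : ℕ) (hk : 0 < k) (hd : Fintype.card F - 1 ∣ k) : zP F k = 0 := by
  induction k using Nat.strong_induction_on with
  | _ k ih =>
    rw [zP_rec, Finset.sum_eq_single 0]
    · simp [hd, zP, sP]
    · intro R hR h0
      have hR' := Finset.mem_range.1 hR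
      split_ifs with h
      · rw [ih R hR' (by omega) ((Nat.dvd_sub_iff_right hR'.le hd).1 h), mul_zero]
      · rfl
    · intro h
      simp at h
      omega

/-- By `rP_succ_eq` the sum of the `rP` is expressed by `zP F k`, which is zero. -/
lemma sum_rP_eq_zero {k N : ℕ} (hk : 0 < k) (hd : Fintype.card F - 1 ∣ k) (hN : k + 1 < N) :
    ∑ d ∈ Finset.range N, rP F d k = 0 := by
  obtain ⟨N, rfl⟩ : ∃ M, N = M + 1 := ⟨N - 1, by omega⟩
  rw [Finset.sum_range_succ']
  simp_rw [rP_succ_eq]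
  rw [Finset.sum_sub_distrib, ← Finset.mul_sum, zP_eq (by omega), zP_eq_zero k hk hd]
  have := Finset.sum_range_succ' (fun d => sP F d k) N
  rw [zP_eq (by omega), zP_eq_zero k hk hd] at this
  simp only [sP, rP] at this ⊢
  rw [mul_zero, sub_zero]
  exact this.symm

lemma coeff_zero_rP {k : ℕ} (hd : ¬ Fintype.card F - 1 ∣ k) (d : ℕ) :
    (rP F (d + 1) k).coeff 0 = 0 := by
  rw [rP, coeff_neg, finsetSum_coeff, Finset.sum_eq_zero, neg_zero]
  intro R _
  split_ifs with h
  · have : R ≠ 0 := by rintro rfl; exact hd (by simpa using h)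
    simp [mul_coeff_zero, this.symm]
  · simp

lemma sum_rP_ne_zero {k N : ℕ} (hd : ¬ Fintype.card F - 1 ∣ k) :
    ∑ d ∈ Finset.range (N + 1), rP F d k ≠ 0 := by
  intro h
  have := congrArg (fun P : F[X] => P.coeff 0) h
  simp only [Finset.sum_range_succ', coeff_add, finsetSum_coeff, coeff_zero_rP hd] at this
  simp [rP] at this

end

/-! ### Orders of vanishing of the power sums -/

section
variable {F : Type} [Field F] [Fintype F] {p f : ℕ} [NeZero f]

/-- Lucas' theorem. -/
lemma choose_ne_zero_iff (hp : p.Prime) (hF : Fintype.card F = p ^ f) (k R : ℕ) :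
    (k.choose R : F) ≠ 0 ↔ dLe p R k := by
  have := Fact.mk hp
  have : CharP F p := charP_of_card_eq_prime_pow hF
  have h1 : R < p ^ (R + k) := lt_of_lt_of_le (Nat.lt_pow_self hp.one_lt)
    (Nat.pow_le_pow_right hp.pos (by omega))
  have h2 : k < p ^ (R + k) := lt_of_lt_of_le (Nat.lt_pow_self hp.one_lt)
    (Nat.pow_le_pow_right hp.pos (by omega))
  have h3 : k.choose R ≡ ∏ j ∈ Finset.range (R + k), (dg p k j).choose (dg p R j) [MOD p] := by
    rw [← Int.natCast_modEq_iff]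
    push_cast
    exact Choose.choose_modEq_prod_range_choose h2 h1
  rw [Ne, CharP.cast_eq_zero_iff F p, h3.dvd_iff dvd_rfl, hp.prime.dvd_finsetProd_iff]
  push Not
  have key : ∀ j, ¬ p ∣ (dg p k j).choose (dg p R j) ↔ dg p R j ≤ dg p k j := by
    intro j
    have hlt : dg p k j < p := Nat.mod_lt _ hp.pos
    constructor
    · intro h
      by_contra hc
      rw [Nat.choose_eq_zero_of_lt (by omega)] at h
      exact h (dvd_zero _)
    · intro h hd
      have h4 : p ∣ (dg p k j).factorial := by
        rw [← Nat.choose_mul_factorial_mul_factorial h, mul_assoc]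
        exact hd.mul_right _
      have := hp.dvd_factorial.1 h4
      omega
  constructor
  · intro h j
    by_cases hj : j < R + k
    · exact (key j).1 (h j (Finset.mem_range.2 hj))
    · have : dg p R j = 0 := by
        unfold dg
        rw [Nat.div_eq_of_lt (h1.trans_le (Nat.pow_le_pow_right hp.pos (by omega)))]
        simp
      omega
  · intro h j _
    exact (key j).2 (h j)

lemma coeff_term (k R N d : ℕ) : ((if Fintype.card F - 1 ∣ k - R then
      (k.choose R : F[X]) * X ^ R * sP F d R else 0).coeff N : F) =
    if Fintype.card F - 1 ∣ k - R ∧ R ≤ N then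
      (k.choose R : F) * (sP F d R).coeff (N - R) else 0 := by
  by_cases h : Fintype.card F - 1 ∣ k - R
  · rw [if_pos h, mul_right_comm, ← C_eq_natCast, coeff_mul_X_pow']
    by_cases h' : R ≤ N
    · rw [if_pos h', if_pos ⟨h, h'⟩, coeff_C_mul]
    · rw [if_neg h', if_neg (fun a => h' a.2)]
  · rw [if_neg h, if_neg (fun a => h a.1), coeff_zero]

/-- A monomial of `sP F d k` comes from a chain of length `d` with sum its exponent. -/
lemma sP_coeff_eq_zero (hp : p.Prime) (hF : Fintype.card F = p ^ f) :
    ∀ (d k N : ℕ), (∀ l, SCh p f k l → l.length = d → l.sum ≠ N) → (sP F d k).coeff N = 0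
  | 0, k, N, h => by
    have := h [] trivial rfl
    rw [sP, coeff_one, if_neg]
    intro h; exact this (by simpa using h.symm)
  | d + 1, k, N, h => by
    rw [sP, coeff_neg, finsetSum_coeff, Finset.sum_eq_zero, neg_zero]
    intro R hR
    have hR' := Finset.mem_range.1 hR
    rw [coeff_term]
    split_ifs with hc
    · by_contra hne
      have h1 := (choose_ne_zero_iff hp hF k R).1 (left_ne_zero_of_mul hne)
      apply right_ne_zero_of_mul hne
      apply sP_coeff_eq_zero hp hF
      intro l hl hlen hsum
      refine h (R :: l) ⟨hR', h1, ?_, hl⟩ (by simp [hlen]) (by simp [hsum]; omega)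
      exact (Nat.modEq_iff_dvd' hR'.le).2 (hF ▸ hc.1)
    · rfl

/-- If only one chain of length `d` has sum `N`, no cancellation takes place in degree `N`. -/
lemma sP_coeff_ne_zero (hp : p.Prime) (hF : Fintype.card F = p ^ f) :
    ∀ (k N : ℕ) (l0 : List ℕ), SCh p f k l0 → l0.sum = N →
      (∀ l, SCh p f k l → l.length = l0.length → l.sum = N → l = l0) →
      (sP F l0.length k).coeff N ≠ 0
  | k, N, [], _, hs, _ => by
    simp at hs
    simp [sP, ← hs]
  | k, N, R :: l0, hl, hs, hu => by
    obtain ⟨h1, h2, h3, h4⟩ := hl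
    simp only [List.sum_cons] at hs
    rw [List.length_cons, sP, coeff_neg, finsetSum_coeff, Finset.sum_eq_single R]
    · rw [coeff_term, if_pos ⟨hF ▸ (Nat.modEq_iff_dvd' h1.le).1 h3, by omega⟩, neg_ne_zero]
      refine mul_ne_zero ((choose_ne_zero_iff hp hF k R).2 h2) ?_
      refine sP_coeff_ne_zero hp hF R (N - R) l0 h4 (by omega) ?_
      intro l hl hlen hsum
      have := hu (R :: l) ⟨h1, h2, h3, hl⟩ (by simp [hlen]) (by simp [hsum]; omega)
      exact (List.cons.inj this).2
    · intro R' hR hne'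
      have hR' := Finset.mem_range.1 hR
      rw [coeff_term]
      split_ifs with hc
      · by_contra hne
        have h1' := (choose_ne_zero_iff hp hF k R').1 (left_ne_zero_of_mul hne)
        apply right_ne_zero_of_mul hne
        apply sP_coeff_eq_zero hp hF
        intro l hl hlen hsum
        have := hu (R' :: l) ⟨hR', h1', (Nat.modEq_iff_dvd' hR'.le).2 (hF ▸ hc.1), hl⟩
          (by simp [hlen]) (by simp [hsum]; omega)
        exact hne' (List.cons.inj this).1
      · rfl
    · intro h
      exact absurd (Finset.mem_range.2 h1) h

lemma rP_coeff_eq_zero (hp : p.Prime) (hF : Fintype.card F = p ^ f) {d k N : ℕ}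
    (h : ∀ l, WCh p f k l → l.length = d → l.sum ≠ N) : (rP F d k).coeff N = 0 := by
  cases d with
  | zero =>
    have := h [] trivial rfl
    rw [rP, coeff_one, if_neg]
    intro h; exact this (by simpa using h.symm)
  | succ d =>
    rw [rP, coeff_neg, finsetSum_coeff, Finset.sum_eq_zero, neg_zero]
    intro R hR
    have hR' : R ≤ k := Nat.lt_succ_iff.1 (Finset.mem_range.1 hR)
    rw [coeff_term]
    split_ifs with hc
    · by_contra hne
      have h1 := (choose_ne_zero_iff hp hF k R).1 (left_ne_zero_of_mul hne)
      apply right_ne_zero_of_mul hne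
      apply sP_coeff_eq_zero hp hF
      intro l hl hlen hsum
      refine h (R :: l) ⟨h1, ?_, hl⟩ (by simp [hlen]) (by simp [hsum]; omega)
      exact (Nat.modEq_iff_dvd' hR').2 (hF ▸ hc.1)
    · rfl

lemma rP_coeff_ne_zero (hp : p.Prime) (hF : Fintype.card F = p ^ f) {k : ℕ} {l0 : List ℕ}
    (hl : WCh p f k l0)
    (hu : ∀ l, WCh p f k l → l.length = l0.length → l.sum = l0.sum → l = l0) :
    (rP F l0.length k).coeff l0.sum ≠ 0 := by
  cases l0 with
  | nil => simp [rP]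
  | cons R l0 =>
    obtain ⟨h2, h3, h4⟩ := hl
    have h1 := h2.le hp.two_le
    rw [List.length_cons, rP, coeff_neg, finsetSum_coeff, Finset.sum_eq_single R]
    · rw [coeff_term, if_pos ⟨hF ▸ (Nat.modEq_iff_dvd' h1).1 h3, by simp⟩, neg_ne_zero]
      refine mul_ne_zero ((choose_ne_zero_iff hp hF k R).2 h2) ?_
      refine sP_coeff_ne_zero hp hF R _ l0 h4 (by simp) ?_
      intro l hl hlen hsum
      have := hu (R :: l) ⟨h2, h3, hl⟩ (by simp [hlen]) (by simp [hsum])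
      exact (List.cons.inj this).2
    · intro R' hR hne'
      have hR' : R' ≤ k := Nat.lt_succ_iff.1 (Finset.mem_range.1 hR)
      rw [coeff_term]
      split_ifs with hc
      · by_contra hne
        have h1' := (choose_ne_zero_iff hp hF k R').1 (left_ne_zero_of_mul hne)
        apply right_ne_zero_of_mul hne
        apply sP_coeff_eq_zero hp hF
        intro l hl hlen hsum
        have := hu (R' :: l) ⟨h1', (Nat.modEq_iff_dvd' hR').2 (hF ▸ hc.1), hl⟩
          (by simp [hlen]) (by rw [List.sum_cons, hsum]; omega)
        exact hne' (List.cons.inj this).1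
      · rfl
    · intro h
      exact absurd (Finset.mem_range.2 (by omega)) h

lemma WCh.drop_head {k R R' : ℕ} {l : List ℕ} (h : WCh p f k (R :: R' :: l)) :
    WCh p f k (R' :: l) ∧ 0 < R := by
  obtain ⟨h1, h2, h3, h4, h5, h6⟩ := h
  exact ⟨⟨h4.trans h1, h5.trans h2, h6⟩, by omega⟩

/-- Longer chains are strictly more expensive than the minimum for shorter ones. -/
lemma WCh.lt_sum {k d M : ℕ}
    (hM : ∀ l, WCh p f k l → l.length = d + 1 → M ≤ l.sum) :
    ∀ l, WCh p f k l → d + 1 < l.length → M < l.sum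
  | [], _, h => by simp at h
  | [R], _, h => by simp at h
  | R :: R' :: l, hl, h => by
    obtain ⟨h1, h2⟩ := hl.drop_head
    have h3 : M ≤ (R' :: l).sum := by
      rcases Nat.lt_or_ge (d + 1) (R' :: l).length with h' | h'
      · exact (WCh.lt_sum hM (R' :: l) h1 h').le
      · refine hM _ h1 ?_
        simp only [List.length_cons] at h h' ⊢
        omega
    rw [List.sum_cons]
    omega

/-- If there is no chain of length `n + 1`, then `rP F d k` vanishes for `d > n`. -/
lemma rP_zero_of_lt (hp : p.Prime) (hF : Fintype.card F = p ^ f) {k n d : ℕ}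
    (h : ¬ ∀ s : ZMod f, ((p : ℤ) ^ f - 1) * n ≤ US p f k k s) (hd : n + 1 ≤ d) :
    rP F d k = 0 := by
  ext N
  rw [coeff_zero]
  apply rP_coeff_eq_zero hp hF
  intro l hl hlen _
  apply h
  intro s
  have h1 := hl.bound hp.two_le (d := d - 1) (by omega) s
  have hq := q1_pos (f := f) hp.two_le
  refine le_trans ?_ h1
  apply mul_le_mul_of_nonneg_left _ hq.le
  exact_mod_cast (by omega : n ≤ d - 1)

/-- The order `M` of `rP F n k` at `X = 0` is finite when chains of length `n` exist; it is a lower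
bound for the order of `rP F d k` with `d ≥ n`, strict if `d > n > 0`. -/
lemma exists_order (hp : p.Prime) (hF : Fintype.card F = p ^ f) {k n : ℕ}
    (h : n = 0 ∨ ∀ s : ZMod f, ((p : ℤ) ^ f - 1) * (n - 1 : ℕ) ≤ US p f k k s) :
    ∃ M, (rP F n k).coeff M ≠ 0 ∧ (∀ d, n ≤ d → X ^ M ∣ rP F d k) ∧
      ∀ d, n < d → 0 < n → X ^ (M + 1) ∣ rP F d k := by
  rcases Nat.eq_zero_or_pos n with rfl | hn
  · exact ⟨0, by simp [rP], by simp, by simp⟩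
  obtain ⟨l0, hl0, hlen, hmin⟩ := exists_min_chain (p := p) (f := f) (k := k) hp.two_le
    (h.resolve_left hn.ne')
  have hmin' : ∀ l, WCh p f k l → l.length = n - 1 + 1 → l0.sum ≤ l.sum := by
    intro l hl hle
    by_cases he : l = l0
    · rw [he]
    · exact (hmin l hl hle he).le
  have hlen' : l0.length = n := by omega
  have hgt : ∀ d, n < d → X ^ (l0.sum + 1) ∣ rP F d k := by
    intro d hd
    rw [X_pow_dvd_iff]
    intro N hN
    apply rP_coeff_eq_zero hp hF
    intro l hl hle hs
    have := WCh.lt_sum hmin' l hl (by omega)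
    omega
  refine ⟨l0.sum, ?_, ?_, fun d hd _ => hgt d hd⟩
  · rw [← hlen']
    apply rP_coeff_ne_zero hp hF hl0
    intro l hl hle hs
    by_contra he
    have := hmin l hl (by omega) he
    omega
  · intro d hd
    rcases hd.lt_or_eq with hd | rfl
    · exact (pow_dvd_pow X (Nat.le_succ _)).trans (hgt d hd)
    rw [X_pow_dvd_iff]
    intro N hN
    apply rP_coeff_eq_zero hp hF
    intro l hl hle hs
    have := hmin' l hl (by omega)
    omega
end

/-! ### The multiple zeta value -/

section
variable {F : Type} [Field F] [Fintype F] {p f : ℕ} [NeZero f] {r : ℕ}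

/-- The strictly decreasing tuples `d` with `d i ≤ k i + 1`; the other ones contribute zero. -/
noncomputable def zetaIdx (k : Fin r → ℕ) : Finset (Fin r → ℕ) :=
  (Fintype.piFinset fun i => Finset.range (k i + 2)).filter StrictAnti

/-- The polynomial whose value at `v` is the zeta value at `-k`. -/
noncomputable def zetaP (F : Type) [Field F] [Fintype F] (k : Fin r → ℕ) : F[X] :=
  ∑ d ∈ zetaIdx k, ∏ i, rP F (d i) (k i)

lemma prod_rP_eq_zero {k d : Fin r → ℕ} (hd : StrictAnti d) (h : d ∉ zetaIdx k) :
    ∏ i, rP F (d i) (k i) = 0 := by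
  have : ∃ i, k i + 1 < d i := by
    by_contra hc
    push Not at hc
    exact h (Finset.mem_filter.2 ⟨Fintype.mem_piFinset.2 fun i => Finset.mem_range.2 (by
      have := hc i; omega), hd⟩)
  obtain ⟨i, hi⟩ := this
  exact Finset.prod_eq_zero (Finset.mem_univ i) (rP_eq_zero hi)

lemma zetaV_eq {v : F[X]} (hv : v.Monic) (hdeg : v.natDegree = 1) (s : Fin r → ℤ) :
    zetaV F v s = (zetaP F fun i => (-(s i)).toNat).comp v := by
  unfold zetaV zetaP
  have h : ∀ d : Fin r → ℕ, ∏ i, rPowerSum F v (d i) (-(s i)).toNat =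
      (∏ i, rP F (d i) (-(s i)).toNat).comp v := by
    intro d
    simp_rw [rPowerSum_eq hv hdeg]
    exact (map_prod (compRingHom v) _ _).symm
  rw [show (∑ d ∈ zetaIdx fun i => (-(s i)).toNat, ∏ i, rP F (d i) (-(s i)).toNat).comp v =
    ∑ d ∈ zetaIdx fun i => (-(s i)).toNat, (∏ i, rP F (d i) (-(s i)).toNat).comp v from
    map_sum (compRingHom v) _ _]
  simp_rw [h]
  apply finsum_mem_eq_sum_of_subset
  · rintro d ⟨hd, hs⟩
    by_contra hc
    apply hs
    simp only []
    rw [prod_rP_eq_zero hd hc, zero_comp]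
  · intro d hd
    exact (Finset.mem_filter.1 hd).2

lemma comp_eq_zero_iff_of_deg {v : F[X]} (hdeg : v.natDegree = 1) (P : F[X]) :
    P.comp v = 0 ↔ P = 0 := by
  rw [comp_eq_zero_iff]
  constructor
  · rintro (h | ⟨_, h⟩)
    · exact h
    · rw [h, natDegree_C] at hdeg
      omega
  · exact Or.inl

lemma coeff_X_pow_mul_self (Q : F[X]) (M : ℕ) : (X ^ M * Q).coeff M = Q.coeff 0 := by
  have := coeff_X_pow_mul Q M 0
  rwa [Nat.zero_add] at this

lemma strictAnti_ge {d : Fin r → ℕ} (hd : StrictAnti d) (i : Fin r) : r - 1 - (i : ℕ) ≤ d i := by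
  obtain ⟨n, hn⟩ : ∃ n, r - 1 - (i : ℕ) = n := ⟨_, rfl⟩
  rw [hn]
  induction n generalizing i with
  | zero => omega
  | succ n ih =>
    have h1 : (i : ℕ) + 1 < r := by omega
    have h2 := ih ⟨i + 1, h1⟩ (by simp; omega)
    have h3 := hd (show i < ⟨i + 1, h1⟩ from Fin.lt_def.2 (by simp))
    omega

/-- A tuple other than `(r - 1, …, 1, 0)` exceeds it at some index before the last, where
`exists_order` gives a strict inequality. -/
lemma strictAnti_gt {d : Fin r → ℕ} (hr : 1 < r) (hd : StrictAnti d)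
    (hne : d ≠ fun i : Fin r => r - 1 - (i : ℕ)) :
    ∃ i : Fin r, 0 < r - 1 - (i : ℕ) ∧ r - 1 - (i : ℕ) < d i := by
  by_contra hc
  push Not at hc
  apply hne
  funext i
  have h1 := strictAnti_ge hd i
  rcases Nat.eq_zero_or_pos (r - 1 - (i : ℕ)) with h0 | h0
  · have hir := i.2
    have h2 := hc ⟨r - 2, by omega⟩ (by simp; omega)
    have h3 := hd (show (⟨r - 2, by omega⟩ : Fin r) < i from Fin.lt_def.2 (by simp; omega))
    simp only at h2
    omega
  · have := hc i h0
    omega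

lemma zetaP_one (k : Fin 1 → ℕ) :
    zetaP F k = ∑ d ∈ Finset.range (k 0 + 2), rP F d (k 0) := by
  unfold zetaP
  refine Finset.sum_nbij' (fun d => d 0) (fun n _ => n) ?_ ?_ ?_ ?_ ?_
  · intro d hd
    exact Fintype.mem_piFinset.1 (Finset.mem_filter.1 hd).1 0
  · intro n hn
    refine Finset.mem_filter.2 ⟨Fintype.mem_piFinset.2 fun i => ?_, ?_⟩
    · rw [Subsingleton.elim i 0]; exact hn
    · intro i j hij
      exact absurd (Subsingleton.elim i j) hij.ne
  · intro d _
    funext i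
    rw [Subsingleton.elim i 0]
  · intro n _; rfl
  · intro d _
    simp

lemma zetaP_one_eq_zero_iff {k : Fin 1 → ℕ} (hk : 0 < k 0) :
    zetaP F k = 0 ↔ Fintype.card F - 1 ∣ k 0 := by
  rw [zetaP_one]
  constructor
  · intro h
    by_contra hc
    exact sum_rP_ne_zero hc h
  · intro h
    exact sum_rP_eq_zero hk h (by omega)

/-- If all factors of the term `d = (r - 1, …, 1, 0)` are nonzero, it has strictly smaller order than
all others. If one is zero, then the corresponding factor of every term is. -/
lemma zetaP_eq_zero_iff (hp : p.Prime) (hF : Fintype.card F = p ^ f) (hr : 1 < r)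
    (k : Fin r → ℕ) : zetaP F k = 0 ↔
      ∃ i : Fin r, ¬ (r - 1 - (i : ℕ) = 0 ∨
        ∀ s : ZMod f, ((p : ℤ) ^ f - 1) * (r - 1 - (i : ℕ) - 1 : ℕ) ≤ US p f (k i) (k i) s) := by
  constructor
  · contrapose!
    intro h
    choose M hM1 hM2 hM3 using fun i => exists_order (F := F) hp hF (h i)
    suffices hs : (zetaP F k).coeff (∑ i, M i) ≠ 0 by
      intro h0; rw [h0] at hs; simp at hs
    set d0 : Fin r → ℕ := fun i => r - 1 - (i : ℕ) with hd0
    have hanti : StrictAnti d0 := by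
      intro i j hij
      have h1 := Fin.lt_def.1 hij
      have := j.2
      simp only [hd0]; omega
    have hlead : (∏ i, rP F (d0 i) (k i)).coeff (∑ i, M i) ≠ 0 := by
      choose Q hQ using fun i => hM2 i (d0 i) le_rfl
      have hQ0 : ∀ i, (Q i).coeff 0 ≠ 0 := by
        intro i
        have := hM1 i
        rwa [show rP F (r - 1 - (i : ℕ)) (k i) = X ^ M i * Q i from hQ i,
          coeff_X_pow_mul_self] at this
      simp_rw [hQ]
      rw [Finset.prod_mul_distrib, Finset.prod_pow_eq_pow_sum, coeff_X_pow_mul_self,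
        coeff_zero_prod]
      exact Finset.prod_ne_zero_iff.2 fun i _ => hQ0 i
    unfold zetaP
    rw [finsetSum_coeff, Finset.sum_eq_single d0]
    · exact hlead
    · intro d hd hne
      have hda := (Finset.mem_filter.1 hd).2
      obtain ⟨i, hi0, hi⟩ := strictAnti_gt hr hda hne
      have hdvd : X ^ (∑ i, M i + 1) ∣ ∏ i, rP F (d i) (k i) := by
        rw [← Finset.mul_prod_erase _ _ (Finset.mem_univ i),
          ← Finset.add_sum_erase _ _ (Finset.mem_univ i), add_right_comm, pow_add]
        refine mul_dvd_mul (hM3 i _ hi hi0) ?_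
        rw [← Finset.prod_pow_eq_pow_sum]
        exact Finset.prod_dvd_prod_of_dvd _ _ fun j _ => hM2 j _ (strictAnti_ge hda j)
      exact X_pow_dvd_iff.1 hdvd _ (Nat.lt_succ_self _)
    · intro h0
      rw [prod_rP_eq_zero hanti h0] at hlead
      simp at hlead
  · rintro ⟨i, hi⟩
    rw [not_or] at hi
    apply Finset.sum_eq_zero
    intro d hd
    apply Finset.prod_eq_zero (Finset.mem_univ i)
    apply rP_zero_of_lt hp hF hi.2
    have := strictAnti_ge (Finset.mem_filter.1 hd).2 i
    omega

lemma Lval_cond (hp : 2 ≤ p) (k n : ℕ) : Lval (p ^ f) p f k + 1 < (n : ℚ) ↔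
    ¬ (n = 0 ∨ ∀ s : ZMod f, ((p : ℤ) ^ f - 1) * (n - 1 : ℕ) ≤ US p f k k s) := by
  cases n with
  | zero =>
    have h := (Lval_lt_iff (f := f) (k := k) hp 0).not
    have h0 : ¬ Lval (p ^ f) p f k < (0 : ℕ) := by
      rw [h, not_not]
      intro s
      simp
    rw [Nat.cast_zero] at h0 ⊢
    simp only [true_or, not_true, iff_false]
    linarith
  | succ n =>
    rw [Nat.cast_succ, add_lt_add_iff_right, Lval_lt_iff hp]
    simp

end

theorem stmt14 (p f q : ℕ) (hp : p.Prime) (hf : 0 < f) (hq : q = p ^ f)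
    (F : Type) [Field F] [Fintype F] (hF : Fintype.card F = q)
    (v : F[X]) (hv : v.Monic) (hirr : Irreducible v) (hdeg : v.natDegree = 1)
    (r : ℕ) (hr : 1 ≤ r) (s : Fin r → ℤ) (hs : ∀ i, s i < 0) :
    zetaV F v s = 0 ↔
      (1 < r ∧ ∃ i : Fin r,
          Lval q p f (-(s i)).toNat + 1 < ((r - 1 - (i : ℕ) : ℕ) : ℚ)) ∨
      (r = 1 ∧ ∀ i, ((q : ℤ) - 1) ∣ s i) := by
  subst hq
  have : NeZero f := ⟨hf.ne'⟩
  rw [zetaV_eq hv hdeg, comp_eq_zero_iff_of_deg hdeg]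
  rcases hr.lt_or_eq with h1 | rfl
  · rw [zetaP_eq_zero_iff hp hF h1]
    simp_rw [Lval_cond hp.two_le]
    simp only [h1, true_and, h1.ne', false_and, or_false]
  · have hk : (((-(s 0)).toNat : ℕ) : ℤ) = -(s 0) := Int.toNat_of_nonneg (by have := hs 0; omega)
    rw [zetaP_one_eq_zero_iff (by have := hs 0; omega), hF]
    simp only [lt_irrefl, false_and, false_or, true_and]
    rw [show (∀ i, (((p ^ f : ℕ) : ℤ) - 1) ∣ s i) ↔ (((p ^ f : ℕ) : ℤ) - 1) ∣ s 0 from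
      ⟨fun h => h 0, fun h i => by rw [Subsingleton.elim i 0]; exact h⟩]
    have hq1 : 1 ≤ p ^ f := Nat.one_le_pow _ _ hp.pos
    rw [← Int.natCast_dvd_natCast, hk, dvd_neg, Nat.cast_sub hq1, Nat.cast_one]
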